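/- arXiv:2509.22743 — 8 statements merged into one kernel-verified Lean document; each statement's English description precedes it below -/
import Mathlib

section
/- For every positive integer n, the real linear span of DS_n equals the subspace {A ∈ M_n(ℝ) : there exists c ∈ ℝ with A e = c e and Aᵀ e = c e}. Likewise, the real linear span of RS_n equals {A ∈ M_n(ℝ) : there exists c ∈ ℝ with A e = c e}. -/
/-!
A matrix with all row (and column) sums equal to `c` becomes entrywise positive after adding a
large multiple `t J` of the all-ones matrix `J`; its line sums are then all equal to `c + t n`,
which is positive because `n > 0`, so `A + t J` is a positive multiple of a stochastic matrix.
Since `J / n` is itself doubly stochastic, `A = (c + t n) B - (t n) (J / n)` lies in the span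
(`exists_decomp`). Conversely, having constant line sums is preserved by linear combinations.
-/

open Matrix

/-- Membership in `⟨DS_n⟩`: `∃ c, A e = c e ∧ Aᵀ e = c e`, where `e` is the all-ones vector. -/
def InSpanDS {n : ℕ} (A : Matrix (Fin n) (Fin n) ℝ) : Prop :=
  ∃ c : ℝ, A *ᵥ (fun _ => (1:ℝ)) = c • (fun _ => (1:ℝ)) ∧
    Aᵀ *ᵥ (fun _ => (1:ℝ)) = c • (fun _ => (1:ℝ))

/-- Membership in `⟨RS_n⟩`: `∃ c, A e = c e`. -/
def InSpanRS {n : ℕ} (A : Matrix (Fin n) (Fin n) ℝ) : Prop :=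
  ∃ c : ℝ, A *ᵥ (fun _ => (1:ℝ)) = c • (fun _ => (1:ℝ))

/-- Membership in `R_n = {e vᵀ : vᵀ e = 0}`. -/
def InRn {n : ℕ} (A : Matrix (Fin n) (Fin n) ℝ) : Prop :=
  ∃ v : Fin n → ℝ, (∑ i, v i) = 0 ∧ A = vecMulVec (fun _ => (1:ℝ)) v

/-- Membership in `C_n = {v eᵀ : vᵀ e = 0}`. -/
def InCn {n : ℕ} (A : Matrix (Fin n) (Fin n) ℝ) : Prop :=
  ∃ v : Fin n → ℝ, (∑ i, v i) = 0 ∧ A = vecMulVec v (fun _ => (1:ℝ))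

/-- `A` is doubly stochastic. -/
def IsDS {n : ℕ} (A : Matrix (Fin n) (Fin n) ℝ) : Prop :=
  (∀ i j, 0 ≤ A i j) ∧ (∀ i, ∑ j, A i j = 1) ∧ (∀ j, ∑ i, A i j = 1)

/-- `A` is row stochastic. -/
def IsRS {n : ℕ} (A : Matrix (Fin n) (Fin n) ℝ) : Prop :=
  (∀ i j, 0 ≤ A i j) ∧ (∀ i, ∑ j, A i j = 1)

/-- `A` is column stochastic. -/
def IsCS {n : ℕ} (A : Matrix (Fin n) (Fin n) ℝ) : Prop :=
  (∀ i j, 0 ≤ A i j) ∧ (∀ j, ∑ i, A i j = 1)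

/-- `A` is a permutation matrix. -/
def IsPerm {n : ℕ} (A : Matrix (Fin n) (Fin n) ℝ) : Prop :=
  ∃ σ : Equiv.Perm (Fin n), A = σ.permMatrix ℝ

/-- `s_A = (Σ_{i,j} a_{ij})/n²`. -/
noncomputable def sAvg {n : ℕ} (A : Matrix (Fin n) (Fin n) ℝ) : ℝ :=
  (∑ i, ∑ j, A i j) / (n ^ 2 : ℝ)

/-- `r(A)` with `i`-th entry `(Σ_k a_{ki})/n − s_A`. -/
noncomputable def rVec {n : ℕ} (A : Matrix (Fin n) (Fin n) ℝ) : Fin n → ℝ :=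
  fun i => (∑ k, A k i) / (n : ℝ) - sAvg A

/-- `c(A)` with `i`-th entry `(Σ_k a_{ik})/n − s_A`. -/
noncomputable def cVec {n : ℕ} (A : Matrix (Fin n) (Fin n) ℝ) : Fin n → ℝ :=
  fun i => (∑ k, A i k) / (n : ℝ) - sAvg A

/-- `A_R = e · r(A)ᵀ`. -/
noncomputable def partR {n : ℕ} (A : Matrix (Fin n) (Fin n) ℝ) : Matrix (Fin n) (Fin n) ℝ :=
  vecMulVec (fun _ => (1:ℝ)) (rVec A)

/-- `A_C = c(A) · eᵀ`. -/
noncomputable def partC {n : ℕ} (A : Matrix (Fin n) (Fin n) ℝ) : Matrix (Fin n) (Fin n) ℝ :=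
  vecMulVec (cVec A) (fun _ => (1:ℝ))

/-- `A_DS = A − A_R − A_C`. -/
noncomputable def partDS {n : ℕ} (A : Matrix (Fin n) (Fin n) ℝ) : Matrix (Fin n) (Fin n) ℝ :=
  A - partR A - partC A

lemma inSpanRS_iff {n : ℕ} (A : Matrix (Fin n) (Fin n) ℝ) :
    InSpanRS A ↔ ∃ c : ℝ, ∀ i, ∑ j, A i j = c := by
  simp [InSpanRS, funext_iff, mulVec, dotProduct]

lemma inSpanDS_iff {n : ℕ} (A : Matrix (Fin n) (Fin n) ℝ) :
    InSpanDS A ↔ ∃ c : ℝ, (∀ i, ∑ j, A i j = c) ∧ (∀ j, ∑ i, A i j = c) := by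
  simp [InSpanDS, funext_iff, mulVec, dotProduct]

lemma isDS_uniform {n : ℕ} (hn : 0 < n) :
    IsDS (of fun _ _ => (n : ℝ)⁻¹ : Matrix (Fin n) (Fin n) ℝ) := by
  have hn' : (n : ℝ) ≠ 0 := by positivity
  refine ⟨fun _ _ => by simp, fun _ => ?_, fun _ => ?_⟩ <;> simp [hn']

/-- A matrix with constant row sums is a combination of a row stochastic matrix `B` and the uniform
matrix. The same `B` is doubly stochastic when the column sums have the same constant value, so
this one decomposition serves both spans. -/
lemma exists_decomp {n : ℕ} (hn : 0 < n) (A : Matrix (Fin n) (Fin n) ℝ) (c : ℝ)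
    (hr : ∀ i, ∑ j, A i j = c) :
    ∃ (s t : ℝ) (B : Matrix (Fin n) (Fin n) ℝ), IsRS B ∧
      ((∀ j, ∑ i, A i j = c) → IsDS B) ∧
      A = s • B - t • (of fun _ _ => (n : ℝ)⁻¹ : Matrix (Fin n) (Fin n) ℝ) := by
  have hn' : (n : ℝ) ≠ 0 := by positivity
  obtain ⟨t, ht⟩ : ∃ t : ℝ, ∀ i j, 0 < A i j + t := by
    refine ⟨1 + ∑ i, ∑ j, |A i j|, fun i j => ?_⟩
    have h1 : |A i j| ≤ ∑ j, |A i j| :=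
      Finset.single_le_sum (f := fun j => |A i j|) (fun _ _ => abs_nonneg _) (Finset.mem_univ j)
    have h2 : ∑ j, |A i j| ≤ ∑ i, ∑ j, |A i j| :=
      Finset.single_le_sum (f := fun i => ∑ j, |A i j|)
        (fun _ _ => Finset.sum_nonneg fun _ _ => abs_nonneg _) (Finset.mem_univ i)
    linarith [neg_abs_le (A i j)]
  have hs : 0 < c + n * t := by
    have h : 0 < ∑ j, (A ⟨0, hn⟩ j + t) :=
      Finset.sum_pos (fun j _ => ht _ j) ⟨⟨0, hn⟩, Finset.mem_univ _⟩
    simpa [Finset.sum_add_distrib, hr] using h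
  have hB : IsRS (of fun i j => (c + n * t)⁻¹ * (A i j + t) : Matrix (Fin n) (Fin n) ℝ) := by
    refine ⟨fun i j => (mul_pos (inv_pos.2 hs) (ht i j)).le, fun i => ?_⟩
    simp only [of_apply]
    rw [← Finset.mul_sum]
    simp [Finset.sum_add_distrib, hr, hs.ne']
  refine ⟨c + n * t, n * t, _, hB, fun hc => ⟨hB.1, hB.2, fun j => ?_⟩, ?_⟩
  · simp only [of_apply]
    rw [← Finset.mul_sum]
    simp [Finset.sum_add_distrib, hc, hs.ne']
  · ext i j
    have hs' := hs.ne'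
    simp only [Matrix.sub_apply, Matrix.smul_apply, of_apply, smul_eq_mul]
    field_simp
    ring

theorem stmt0 (n : ℕ) (hn : 0 < n) :
    ((Submodule.span ℝ {A : Matrix (Fin n) (Fin n) ℝ | IsDS A} : Submodule ℝ _) :
        Set (Matrix (Fin n) (Fin n) ℝ)) = {A | InSpanDS A} ∧
    ((Submodule.span ℝ {A : Matrix (Fin n) (Fin n) ℝ | IsRS A} : Submodule ℝ _) :
        Set (Matrix (Fin n) (Fin n) ℝ)) = {A | InSpanRS A} := by
  have hJ := isDS_uniform hn
  constructor
  · ext A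
    rw [SetLike.mem_coe, Set.mem_ofPred_eq]
    constructor
    · intro hA
      rw [inSpanDS_iff]
      induction hA using Submodule.span_induction with
      | mem A hA => exact ⟨1, hA.2⟩
      | zero => exact ⟨0, by simp⟩
      | add A B _ _ hA hB =>
        obtain ⟨a, ha, ha'⟩ := hA
        obtain ⟨b, hb, hb'⟩ := hB
        exact ⟨a + b, by simp [Finset.sum_add_distrib, ha, hb],
          by simp [Finset.sum_add_distrib, ha', hb']⟩
      | smul r A _ hA =>
        obtain ⟨a, ha, ha'⟩ := hA
        exact ⟨r * a, by simp [← Finset.mul_sum, ha], by simp [← Finset.mul_sum, ha']⟩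
    · intro hA
      obtain ⟨c, hr, hc⟩ := (inSpanDS_iff A).1 hA
      obtain ⟨s, t, B, -, hB, rfl⟩ := exists_decomp hn A c hr
      exact Submodule.sub_mem _ (Submodule.smul_mem _ _ (Submodule.subset_span (hB hc)))
        (Submodule.smul_mem _ _ (Submodule.subset_span hJ))
  · ext A
    rw [SetLike.mem_coe, Set.mem_ofPred_eq]
    constructor
    · intro hA
      rw [inSpanRS_iff]
      induction hA using Submodule.span_induction with
      | mem A hA => exact ⟨1, hA.2⟩
      | zero => exact ⟨0, by simp⟩
      | add A B _ _ hA hB =>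
        obtain ⟨a, ha⟩ := hA
        obtain ⟨b, hb⟩ := hB
        exact ⟨a + b, by simp [Finset.sum_add_distrib, ha, hb]⟩
      | smul r A _ hA =>
        obtain ⟨a, ha⟩ := hA
        exact ⟨r * a, by simp [← Finset.mul_sum, ha]⟩
    · intro hA
      obtain ⟨c, hr⟩ := (inSpanRS_iff A).1 hA
      obtain ⟨s, t, B, hB, -, rfl⟩ := exists_decomp hn A c hr
      exact Submodule.sub_mem _ (Submodule.smul_mem _ _ (Submodule.subset_span hB))
        (Submodule.smul_mem _ _ (Submodule.subset_span ⟨hJ.1, hJ.2.1⟩))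
end

section
/- For every positive integer n, ⟨RS_n⟩ is the internal direct sum ⟨DS_n⟩ ⊕ R_n: every A ∈ ⟨RS_n⟩ can be written as A = A₁ + A₂ with A₁ ∈ ⟨DS_n⟩ and A₂ ∈ R_n, and this decomposition is unique. -/
/-!
In terms of entries, membership in `⟨RS_n⟩` says that all row sums equal some `c`, and membership
in `⟨DS_n⟩` that all column sums equal the same `c` too. Adding `e vᵀ` with `∑ v = 0` leaves the row
sums unchanged and adds `n v_j` to the `j`-th column sum. So subtracting `e vᵀ` from
`A ∈ ⟨RS_n⟩` gives an element of `⟨DS_n⟩` exactly when `n v_j = (j-th column sum of A) - c`, which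
has the unique solution `v`; its entries sum to zero because the column sums of `A` add up
to `n c`, the total of the row sums.
-/

open Matrix

lemma mulVec_ones_eq_iff {n : ℕ} (A : Matrix (Fin n) (Fin n) ℝ) (c : ℝ) :
    A *ᵥ (fun _ => (1:ℝ)) = c • (fun _ => (1:ℝ)) ↔ ∀ i, ∑ j, A i j = c := by
  simp [funext_iff, Matrix.mulVec, dotProduct]

theorem stmt2 (n : ℕ) (hn : 0 < n) :
    (∀ A : Matrix (Fin n) (Fin n) ℝ, InSpanRS A →
      ∃ A₁ A₂ : Matrix (Fin n) (Fin n) ℝ, InSpanDS A₁ ∧ InRn A₂ ∧ A = A₁ + A₂) ∧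
    (∀ A₁ A₂ B₁ B₂ : Matrix (Fin n) (Fin n) ℝ, InSpanDS A₁ → InRn A₂ →
      InSpanDS B₁ → InRn B₂ → A₁ + A₂ = B₁ + B₂ → A₁ = B₁ ∧ A₂ = B₂) := by
  have hn' : (n : ℝ) ≠ 0 := by positivity
  simp only [InSpanRS, InSpanDS, InRn, mulVec_ones_eq_iff, transpose_apply]
  refine ⟨?_, ?_⟩
  · rintro A ⟨c, hc⟩
    let v : Fin n → ℝ := fun j => (∑ k, A k j - c) / n
    have hv : ∑ j, v j = 0 := by
      simp only [v]
      rw [← Finset.sum_div, Finset.sum_sub_distrib, Finset.sum_comm]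
      simp [hc]
    refine ⟨A - vecMulVec (fun _ => 1) v, vecMulVec (fun _ => 1) v, ⟨c, fun i => ?_, fun j => ?_⟩,
      ⟨v, hv, rfl⟩, by simp⟩
    · simp [vecMulVec_apply, hc, hv]
    · simp only [Matrix.sub_apply, vecMulVec_apply, one_mul, Finset.sum_sub_distrib,
        Finset.sum_const, Finset.card_univ, Fintype.card_fin, nsmul_eq_mul, v]
      field_simp
      ring
  · rintro A₁ _ B₁ _ ⟨c, hcr, hcc⟩ ⟨v, hv, rfl⟩ ⟨d, hdr, hdc⟩ ⟨w, hw, rfl⟩ h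
    have hent : ∀ i j, A₁ i j + v j = B₁ i j + w j := fun i j => by
      simpa [vecMulVec_apply] using congrFun (congrFun h i) j
    have hcd : c = d := by
      have := Finset.sum_congr rfl fun j (_ : j ∈ Finset.univ) => hent ⟨0, hn⟩ j
      simpa [Finset.sum_add_distrib, hcr, hdr, hv, hw] using this
    have hvw : v = w := by
      funext j
      have := Finset.sum_congr rfl fun i (_ : i ∈ Finset.univ) => hent i j
      simpa [Finset.sum_add_distrib, hcc, hdc, hcd, hn.ne'] using this
    subst hvw
    exact ⟨add_right_cancel h, rfl⟩
end

section
/- For any positive integer m and any matrices A₁, …, A_m ∈ ⟨RS_n⟩, the doubly-stochastic part of the product equals the product of the doubly-stochastic parts: (A₁ A₂ ⋯ A_m)_DS = (A₁)_DS (A₂)_DS ⋯ (A_m)_DS. -/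
/-! Let `J` be the `n × n` matrix with all entries `1 / n`, so that `J * J = J`. A matrix `A` with
`A e = c e` satisfies `A * J = c • J`, has `A_C = 0`, and its doubly stochastic part is
`A - J * A + c • J` (`partDS_eq_of_mulVec`). Expanding the product of two such expressions with the
help of `A * J = a • J`, `B * J = b • J` and `J * J = J`, everything cancels except
`A * B - J * (A * B) + (a * b) • J`, so the doubly stochastic part is multiplicative on `⟨RS_n⟩` (`partDS_mul_of_mulVec`). As it also fixes the identity, the result for products of
arbitrary length follows by induction. -/

open Matrix

/-- The `n × n` matrix `J` with all entries `1 / n`: the orthogonal projection onto `ℝ e`. -/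
noncomputable def avgMatrix (n : ℕ) : Matrix (Fin n) (Fin n) ℝ :=
  Matrix.of fun _ _ => (n : ℝ)⁻¹

lemma avgMatrix_mul_self {n : ℕ} (hn : 0 < n) : avgMatrix n * avgMatrix n = avgMatrix n := by
  have hn' : (n : ℝ) ≠ 0 := by positivity
  ext i j
  simp [avgMatrix, Matrix.mul_apply, hn']

lemma row_sum_of_mulVec {n : ℕ} {A : Matrix (Fin n) (Fin n) ℝ} {c : ℝ}
    (h : A *ᵥ (fun _ => (1:ℝ)) = c • (fun _ => (1:ℝ))) (i : Fin n) : ∑ j, A i j = c := by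
  simpa [Matrix.mulVec, dotProduct] using congrFun h i

lemma mul_avgMatrix_of_mulVec {n : ℕ} {A : Matrix (Fin n) (Fin n) ℝ} {c : ℝ}
    (h : A *ᵥ (fun _ => (1:ℝ)) = c • (fun _ => (1:ℝ))) :
    A * avgMatrix n = c • avgMatrix n := by
  ext i j
  simp [avgMatrix, Matrix.mul_apply, ← Finset.sum_mul, row_sum_of_mulVec h]

lemma mul_mulVec_one {n : ℕ} {A B : Matrix (Fin n) (Fin n) ℝ} {a b : ℝ}
    (hA : A *ᵥ (fun _ => (1:ℝ)) = a • (fun _ => (1:ℝ)))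
    (hB : B *ᵥ (fun _ => (1:ℝ)) = b • (fun _ => (1:ℝ))) :
    (A * B) *ᵥ (fun _ => (1:ℝ)) = (a * b) • (fun _ => (1:ℝ)) := by
  rw [← Matrix.mulVec_mulVec, hB, Matrix.mulVec_smul, hA, smul_smul, mul_comm]

lemma partDS_eq_of_mulVec {n : ℕ} (hn : 0 < n) {A : Matrix (Fin n) (Fin n) ℝ} {c : ℝ}
    (h : A *ᵥ (fun _ => (1:ℝ)) = c • (fun _ => (1:ℝ))) :
    partDS A = A - avgMatrix n * A + c • avgMatrix n := by
  have hn' : (n : ℝ) ≠ 0 := by positivity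
  ext i j
  simp only [partDS, partR, partC, rVec, cVec, sAvg, avgMatrix, row_sum_of_mulVec h,
    Matrix.sub_apply, Matrix.add_apply, Matrix.smul_apply, Matrix.mul_apply, Matrix.of_apply,
    vecMulVec_apply, ← Finset.mul_sum, Finset.sum_const, Finset.card_univ, Fintype.card_fin,
    nsmul_eq_mul, smul_eq_mul]
  field_simp
  ring

lemma partDS_mul_of_mulVec {n : ℕ} (hn : 0 < n) {A B : Matrix (Fin n) (Fin n) ℝ} {a b : ℝ}
    (hA : A *ᵥ (fun _ => (1:ℝ)) = a • (fun _ => (1:ℝ)))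
    (hB : B *ᵥ (fun _ => (1:ℝ)) = b • (fun _ => (1:ℝ))) :
    partDS (A * B) = partDS A * partDS B := by
  rw [partDS_eq_of_mulVec hn hA, partDS_eq_of_mulVec hn hB,
    partDS_eq_of_mulVec hn (mul_mulVec_one hA hB)]
  have hAJ := mul_avgMatrix_of_mulVec hA
  have hJJ := avgMatrix_mul_self hn
  generalize avgMatrix n = J at *
  have hAJB : A * (J * B) = a • (J * B) := by rw [← mul_assoc, hAJ, smul_mul_assoc]
  have hJJB : J * (J * B) = J * B := by rw [← mul_assoc, hJJ]
  simp only [sub_mul, add_mul, mul_sub, mul_add, mul_smul_comm, smul_mul_assoc, mul_assoc,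
    hAJ, hJJ, hAJB, hJJB]
  module

lemma partDS_one {n : ℕ} (hn : 0 < n) : partDS (1 : Matrix (Fin n) (Fin n) ℝ) = 1 := by
  rw [partDS_eq_of_mulVec hn (c := 1) (by simp)]
  simp

/-- Closure of `⟨RS_n⟩` under products is carried along because the induction step needs it
for the tail of the list. -/
lemma partDS_list_prod {n : ℕ} (hn : 0 < n) (l : List (Matrix (Fin n) (Fin n) ℝ))
    (hl : ∀ M ∈ l, InSpanRS M) :
    InSpanRS l.prod ∧ partDS l.prod = (l.map partDS).prod := by
  induction l with
  | nil => exact ⟨⟨1, by simp⟩, by simpa using partDS_one hn⟩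
  | cons M l ih =>
    obtain ⟨⟨b, hb⟩, hprod⟩ := ih fun N hN => hl N (List.mem_cons_of_mem M hN)
    obtain ⟨a, ha⟩ := hl M List.mem_cons_self
    rw [List.prod_cons, List.map_cons, List.prod_cons, ← hprod]
    exact ⟨⟨a * b, mul_mulVec_one ha hb⟩, partDS_mul_of_mulVec hn ha hb⟩

theorem stmt3 (n m : ℕ) (hn : 0 < n) (hm : 0 < m)
    (A : Fin m → Matrix (Fin n) (Fin n) ℝ) (hA : ∀ i, InSpanRS (A i)) :
    partDS (List.ofFn A).prod = (List.ofFn fun i => partDS (A i)).prod := by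
  have h := (partDS_list_prod hn (List.ofFn A) (by simpa [List.mem_ofFn] using hA)).2
  rwa [List.map_ofFn] at h
end

section
/- For any positive integer m and any matrices A₁, …, A_m ∈ ⟨RS_n⟩, the product A₁ A₂ ⋯ A_m and the product (A₁)_DS (A₂)_DS ⋯ (A_m)_DS have the same characteristic polynomial (hence the same spectrum counting multiplicities and the same trace); moreover, for each i ∈ {1, …, m}, the matrix A₁ ⋯ A_{i−1} (A_i)_DS A_{i+1} ⋯ A_m obtained by replacing the single factor A_i by (A_i)_DS also has the same characteristic polynomial as A₁ A₂ ⋯ A_m. -/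
/-!
Row sums of `A ∈ ⟨RS_n⟩` are constant, so `A_C = 0` and `A = A_DS + e r(A)ᵀ` with `r(A)ᵀ e = 0`.
Write `P ∼ Q` (`RowShift P Q`) when `Q e = c e` for some `c` and `P = Q + e vᵀ` with `vᵀ e = 0`.
This relation is compatible with products (`RowShift.mul`), since
`(Q + e vᵀ)(Q' + e v'ᵀ) = Q Q' + e (c v' + Q'ᵀ v)ᵀ`, and the new vector is again orthogonal to `e`.
It also preserves the characteristic polynomial (`RowShift.charpoly_eq`): for real `x ≠ c`,
`x - P = (x - Q)(1 - (x - c)⁻¹ e vᵀ)`, and the last factor has determinant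
`1 - (x - c)⁻¹ vᵀ e = 1`. Replacing any set of factors `A i` by `(A i)_DS` therefore leaves the
characteristic polynomial of the product unchanged.
-/

open Matrix

/-- `P` differs from `Q ∈ ⟨RS_n⟩` by a matrix `e vᵀ` with `vᵀ e = 0`. -/
def RowShift {n : ℕ} (P Q : Matrix (Fin n) (Fin n) ℝ) : Prop :=
  ∃ (c : ℝ) (v : Fin n → ℝ), Q *ᵥ (fun _ => (1:ℝ)) = c • (fun _ => (1:ℝ)) ∧
    v ⬝ᵥ (fun _ => (1:ℝ)) = 0 ∧ P = Q + vecMulVec (fun _ => (1:ℝ)) v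

theorem RowShift.refl {n : ℕ} {Q : Matrix (Fin n) (Fin n) ℝ} (hQ : InSpanRS Q) :
    RowShift Q Q := by
  obtain ⟨c, hc⟩ := hQ
  exact ⟨c, 0, hc, by simp, by simp⟩

theorem RowShift.mul {n : ℕ} {P Q P' Q' : Matrix (Fin n) (Fin n) ℝ}
    (h : RowShift P Q) (h' : RowShift P' Q') : RowShift (P * P') (Q * Q') := by
  obtain ⟨c, v, hQ, hv, rfl⟩ := h
  obtain ⟨c', v', hQ', hv', rfl⟩ := h'
  refine ⟨c' * c, c • v' + v ᵥ* Q', ?_, ?_, ?_⟩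
  · rw [← mulVec_mulVec, hQ', mulVec_smul, hQ, smul_smul]
  · rw [add_dotProduct, smul_dotProduct, hv', ← dotProduct_mulVec, hQ', dotProduct_smul, hv]
    simp
  · rw [add_mul, mul_add, mul_add, mul_vecMulVec, hQ, vecMulVec_mul, vecMulVec_mul_vecMulVec, hv,
      zero_smul, vecMulVec_zero, add_zero, vecMulVec_add, smul_vecMulVec, vecMulVec_smul, add_assoc]

theorem RowShift.charpoly_eq {n : ℕ} {P Q : Matrix (Fin n) (Fin n) ℝ} (h : RowShift P Q) :
    P.charpoly = Q.charpoly := by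
  obtain ⟨c, v, hQ, hv, rfl⟩ := h
  apply Polynomial.eq_of_infinite_eval_eq
  -- It suffices to compare values off the single point `c`, where `x - c` is invertible.
  refine (Set.finite_singleton c).infinite_compl.mono fun x hx => ?_
  have hxc : x - c ≠ 0 := sub_ne_zero.mpr hx
  have hfac : scalar (Fin n) x - (Q + vecMulVec (fun _ => (1:ℝ)) v) =
      (scalar (Fin n) x - Q) * (1 + vecMulVec (fun _ => (1:ℝ)) (-(x - c)⁻¹ • v)) := by
    have he : (scalar (Fin n) x - Q) *ᵥ (fun _ => (1:ℝ)) = (x - c) • (fun _ => (1:ℝ)) := by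
      rw [sub_mulVec, hQ, sub_smul]
      congr 1
      ext i
      simp [scalar_apply, mulVec_diagonal]
    rw [mul_add, mul_one, mul_vecMulVec, he, smul_vecMulVec, vecMulVec_smul, smul_smul,
      mul_neg, mul_inv_cancel₀ hxc, neg_one_smul]
    abel
  have hdet : (1 + vecMulVec (fun _ => (1:ℝ)) (-(x - c)⁻¹ • v)).det = 1 := by
    rw [vecMulVec_eq Unit, det_one_add_replicateCol_mul_replicateRow, smul_dotProduct, hv]
    simp
  rw [Set.mem_ofPred_eq, eval_charpoly, eval_charpoly, hfac, det_mul, hdet, mul_one]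

/-- For `A ∈ ⟨RS_n⟩` the part `A_C` vanishes, so `A` is a row shift of `A_DS`. -/
theorem rowShift_partDS {n : ℕ} (hn : 0 < n) {A : Matrix (Fin n) (Fin n) ℝ} (hA : InSpanRS A) :
    RowShift A (partDS A) := by
  obtain ⟨c, hc⟩ := hA
  have hn' : (n : ℝ) ≠ 0 := by positivity
  have hrow (i : Fin n) : ∑ k, A i k = c := by
    simpa [mulVec, dotProduct] using congrFun hc i
  have hs : sAvg A = c / n := by
    simp only [sAvg, hrow, Finset.sum_const, Finset.card_univ, Fintype.card_fin, nsmul_eq_mul]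
    field_simp
  have hC : partC A = 0 := by
    ext i j
    simp [partC, cVec, vecMulVec_apply, hrow, hs]
  have hr : rVec A ⬝ᵥ (fun _ => (1:ℝ)) = 0 := by
    simp only [dotProduct, rVec, mul_one, Finset.sum_sub_distrib, ← Finset.sum_div]
    rw [Finset.sum_comm]
    simp only [hrow, hs, Finset.sum_const, Finset.card_univ, Fintype.card_fin, nsmul_eq_mul]
    field_simp
    ring
  refine ⟨c, rVec A, ?_, hr, ?_⟩
  · rw [partDS, hC, sub_zero, sub_mulVec, hc, partR, vecMulVec_mulVec, hr]
    simp
  · rw [partDS, hC, sub_zero, partR, sub_add_cancel]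

theorem RowShift.prod_ofFn {n m : ℕ} {A B : Fin m → Matrix (Fin n) (Fin n) ℝ}
    (h : ∀ i, RowShift (A i) (B i)) : RowShift (List.ofFn A).prod (List.ofFn B).prod := by
  induction m with
  | zero => simpa using RowShift.refl (Q := (1 : Matrix (Fin n) (Fin n) ℝ)) ⟨1, by simp⟩
  | succ m ih =>
    simp only [List.ofFn_succ, List.prod_cons]
    exact (h 0).mul (ih fun i => h i.succ)

theorem stmt4 (n m : ℕ) (hn : 0 < n) (hm : 0 < m)
    (A : Fin m → Matrix (Fin n) (Fin n) ℝ) (hA : ∀ i, InSpanRS (A i)) :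
    ((List.ofFn A).prod).charpoly = ((List.ofFn fun i => partDS (A i)).prod).charpoly ∧
    ((List.ofFn A).prod).trace = ((List.ofFn fun i => partDS (A i)).prod).trace ∧
    (∀ i : Fin m, ((List.ofFn A).prod).charpoly =
      ((List.ofFn (Function.update A i (partDS (A i)))).prod).charpoly) := by
  have hall := (RowShift.prod_ofFn fun i => rowShift_partDS hn (hA i)).charpoly_eq
  refine ⟨hall, ?_, fun i => (RowShift.prod_ofFn fun j => ?_).charpoly_eq⟩
  · rw [trace_eq_neg_charpoly_nextCoeff, hall, ← trace_eq_neg_charpoly_nextCoeff]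
  · rcases eq_or_ne j i with rfl | hji
    · simpa using rowShift_partDS hn (hA j)
    · simpa [hji] using RowShift.refl (hA j)
end

section
/- Let n ≥ 3. Every unital ℝ-algebra automorphism φ of ⟨DS_n⟩ has the form φ(A) = P A P⁻¹ for all A ∈ ⟨DS_n⟩, where P is an invertible matrix that can be chosen to be doubly stochastic (in particular P ∈ ⟨DS_n⟩). -/
/-!
`⟨DS_n⟩` splits as `ℝ J ⊕ End(e^⊥)`, where `J = e eᵀ / n`.

*`φ` fixes `J`* (`map_avg`). The matrix `K = φ J` is nonzero and idempotent, and `K B ∈ ℝ K`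
for all `B ∈ ⟨DS_n⟩`, because `J` has the same properties. If `K e = e`, comparing with `B = J`
gives `K = J`. If `K e = 0`, taking `B = (e_j - e/n) zᵀ` shows that a nonzero row of `K` is a
multiple of every nonzero `z ∈ e^⊥`, which is impossible as `dim e^⊥ = n - 1 ≥ 2`. Hence `φ`
preserves the common row and column sum.

*The conjugating matrix* is the one from the usual proof of the Skolem–Noether theorem. Fix
`0 ≠ u ∈ e^⊥` and an eigenvector `w` of `φ(u uᵀ)` for the eigenvalue `u ⬝ u`, and let
`P x = φ(x uᵀ) w` for `x ∈ e^⊥`, `P e = e`. Then `P A = φ(A) P` by multiplicativity, and `P` is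
injective because `φ(u xᵀ) φ(x uᵀ) w = (x ⬝ x) (u ⬝ u) w`. All row and column sums of `P` are
`1`, and `w` may be replaced by a small multiple: this pushes `P` towards `J`, whose entries are
all `1/n > 0`, so that `P` becomes doubly stochastic.
-/

open Matrix

/-- The unital subalgebra `⟨DS_n⟩` of `M_n(ℝ)` (the real linear span of the doubly
stochastic matrices). -/
def spanDSAlg (n : ℕ) : Subalgebra ℝ (Matrix (Fin n) (Fin n) ℝ) where
  carrier := {A | ∃ c : ℝ, A *ᵥ (fun _ => (1:ℝ)) = c • (fun _ => (1:ℝ)) ∧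
    Aᵀ *ᵥ (fun _ => (1:ℝ)) = c • (fun _ => (1:ℝ))}
  mul_mem' := by
    rintro A B ⟨a, ha1, ha2⟩ ⟨b, hb1, hb2⟩
    refine ⟨a * b, ?_, ?_⟩
    · rw [← mulVec_mulVec, hb1, mulVec_smul, ha1, smul_smul, mul_comm b a]
    · rw [transpose_mul, ← mulVec_mulVec, ha2, mulVec_smul, hb2, smul_smul]
  one_mem' := ⟨1, by simp, by simp⟩
  add_mem' := by
    rintro A B ⟨a, ha1, ha2⟩ ⟨b, hb1, hb2⟩
    exact ⟨a + b, by rw [add_mulVec, ha1, hb1, add_smul],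
      by rw [transpose_add, add_mulVec, ha2, hb2, add_smul]⟩
  zero_mem' := ⟨0, by simp, by simp⟩
  algebraMap_mem' := by
    intro r
    refine ⟨r, ?_, ?_⟩
    · ext i
      simp [Matrix.algebraMap_eq_diagonal, mulVec, dotProduct, Matrix.diagonal]
    · ext i
      simp [Matrix.algebraMap_eq_diagonal, mulVec, dotProduct, Matrix.diagonal, Matrix.transpose]

/-! ### Projection onto `e^⊥` and rank-one elements -/

/-- The orthogonal projection of `x` onto `e^⊥`: subtract from `x` its mean. -/
noncomputable def cen {n : ℕ} (x : Fin n → ℝ) : Fin n → ℝ := fun i => x i - (∑ k, x k) / n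

theorem sum_cen {n : ℕ} (hn : 3 ≤ n) (x : Fin n → ℝ) : ∑ i, cen x i = 0 := by
  have : (n : ℝ) ≠ 0 := by positivity
  simp [cen, Finset.sum_sub_distrib]
  field_simp
  ring

theorem cen_of_sum {n : ℕ} {x : Fin n → ℝ} (h : ∑ i, x i = 0) : cen x = x := by
  ext i; simp [cen, h]

theorem mem_iff {n : ℕ} (A : Matrix (Fin n) (Fin n) ℝ) :
    A ∈ spanDSAlg n ↔ ∃ c : ℝ, (∀ i, ∑ j, A i j = c) ∧ ∀ j, ∑ i, A i j = c := by
  change (∃ c : ℝ, _ ∧ _) ↔ _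
  simp [funext_iff, mulVec, dotProduct]

theorem sum_mulVec {n : ℕ} {A : Matrix (Fin n) (Fin n) ℝ} {c : ℝ}
    (h : ∀ j, ∑ i, A i j = c) (x : Fin n → ℝ) : ∑ i, (A *ᵥ x) i = c * ∑ i, x i := by
  simp only [mulVec, dotProduct]
  rw [Finset.sum_comm]
  simp [← Finset.sum_mul, h, Finset.mul_sum]

theorem mulVec_const {n : ℕ} {A : Matrix (Fin n) (Fin n) ℝ} {c : ℝ}
    (h : ∀ i, ∑ j, A i j = c) (a : ℝ) : (A *ᵥ fun _ => a) = fun _ => c * a := by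
  ext i
  simp [mulVec, dotProduct, ← Finset.sum_mul, h]

theorem cen_mulVec {n : ℕ} {A : Matrix (Fin n) (Fin n) ℝ} {c : ℝ}
    (h : ∀ i, ∑ j, A i j = c) (h' : ∀ j, ∑ i, A i j = c) (x : Fin n → ℝ) :
    cen (A *ᵥ x) = A *ᵥ cen x := by
  have : cen x = x - fun _ => (∑ k, x k) / n := rfl
  rw [this, mulVec_sub, mulVec_const h]
  ext i
  simp [cen, sum_mulVec h']
  ring

/-- The rank-one element `x₀ y₀ᵀ` of `⟨DS_n⟩`, where `x₀`, `y₀` are the projections of `x`, `y`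
onto `e^⊥`. Projecting makes it total and bilinear in `x`, `y`. -/
noncomputable def rankOne {n : ℕ} (hn : 3 ≤ n) (x y : Fin n → ℝ) : spanDSAlg n :=
  ⟨vecMulVec (cen x) (cen y), (mem_iff _).2 ⟨0, by
    simp [vecMulVec_apply, ← Finset.mul_sum, sum_cen hn], by
    simp [vecMulVec_apply, ← Finset.sum_mul, sum_cen hn]⟩⟩

/-- The matrix `J = e eᵀ / n`, all of whose entries are `1/n`. -/
noncomputable def avg {n : ℕ} (hn : 3 ≤ n) : spanDSAlg n :=
  ⟨of fun _ _ => (1 / n : ℝ), (mem_iff _).2 ⟨1, by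
    have : (n : ℝ) ≠ 0 := by positivity
    simp [this], by
    have : (n : ℝ) ≠ 0 := by positivity
    simp [this]⟩⟩

theorem mul_avg {n : ℕ} (hn : 3 ≤ n) (A : spanDSAlg n) {c : ℝ} (h : ∀ i, ∑ j, A.1 i j = c) :
    A * avg hn = c • avg hn := by
  ext i j
  simp [avg, Matrix.mul_apply, ← Finset.sum_mul, h]

theorem avg_mul {n : ℕ} (hn : 3 ≤ n) (A : spanDSAlg n) {c : ℝ} (h : ∀ j, ∑ i, A.1 i j = c) :
    avg hn * A = c • avg hn := by
  ext i j
  simp [avg, Matrix.mul_apply, ← Finset.mul_sum, h, mul_comm]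

theorem avg_ne_zero {n : ℕ} (hn : 3 ≤ n) : avg hn ≠ 0 := by
  intro h
  have h1 := congrArg (fun A : spanDSAlg n => A.1 ⟨0, by omega⟩ ⟨0, by omega⟩) h
  have : (n : ℝ) ≠ 0 := by positivity
  simp [avg] at h1
  omega

theorem mul_rankOne {n : ℕ} (hn : 3 ≤ n) (A : spanDSAlg n) (x y : Fin n → ℝ) :
    A * rankOne hn x y = rankOne hn (A.1 *ᵥ x) y := by
  obtain ⟨c, h, h'⟩ := (mem_iff _).1 A.2
  apply Subtype.ext
  simp [rankOne, mul_vecMulVec, cen_mulVec h h']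

theorem rankOne_mul_rankOne {n : ℕ} (hn : 3 ≤ n) (x y z t : Fin n → ℝ) :
    rankOne hn x y * rankOne hn z t = (cen y ⬝ᵥ cen z) • rankOne hn x t := by
  apply Subtype.ext
  simp [rankOne, vecMulVec_mul_vecMulVec, vecMulVec_smul]

/-! ### Automorphisms fix `J` -/

theorem map_avg {n : ℕ} (hn : 3 ≤ n) (φ : spanDSAlg n ≃ₐ[ℝ] spanDSAlg n) :
    φ (avg hn) = avg hn := by
  have hK0 : φ (avg hn) ≠ 0 := by simpa using avg_ne_zero hn
  have hmul : ∀ B, ∃ c : ℝ, φ (avg hn) * B = c • φ (avg hn) := by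
    intro B
    obtain ⟨c, -, h⟩ := (mem_iff _).1 (φ.symm B).2
    refine ⟨c, ?_⟩
    rw [← map_smul, ← avg_mul hn _ h, map_mul, φ.apply_symm_apply]
  have hidem : φ (avg hn) * φ (avg hn) = φ (avg hn) := by
    rw [← map_mul, mul_avg hn (avg hn) (c := 1), one_smul]
    intro i
    have : (n : ℝ) ≠ 0 := by positivity
    simp [avg, this]
  generalize φ (avg hn) = K at *
  obtain ⟨k, hr, hc⟩ := (mem_iff _).1 K.2
  have hKJ := mul_avg hn K hr
  by_cases hk : k = 0
  · exfalso
    obtain ⟨i, j, hij⟩ : ∃ i j, K.1 i j ≠ 0 := by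
      by_contra! h
      exact hK0 (Subtype.ext (Matrix.ext h))
    -- `K (e_j - e/n) = K e_j` because `K e = 0`
    have hrow : ∀ z : Fin n → ℝ, ∑ l, z l = 0 → ∃ c : ℝ, ∀ l, K.1 i j * z l = c * K.1 i l := by
      intro z hz
      obtain ⟨c, h⟩ := hmul (rankOne hn (Pi.single j 1) z)
      refine ⟨c, fun l => ?_⟩
      rw [mul_rankOne] at h
      have h1 := congrArg (fun A : spanDSAlg n => A.1 i l) h
      have h2 : ∑ m, (K.1 *ᵥ Pi.single j 1) m = 0 := by
        rw [sum_mulVec hc, hk, zero_mul]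
      simp only [rankOne, cen_of_sum hz, cen_of_sum h2] at h1
      simpa [vecMulVec_apply] using h1
    let a : Fin n := ⟨0, by omega⟩
    let b : Fin n := ⟨1, by omega⟩
    let d : Fin n := ⟨2, by omega⟩
    have hab : a ≠ b := by simp [a, b]
    have had : a ≠ d := by simp [a, d]
    have hbd : b ≠ d := by simp [b, d]
    obtain ⟨c1, h1⟩ := hrow (Pi.single a 1 - Pi.single b 1) (by simp)
    obtain ⟨c2, h2⟩ := hrow (Pi.single a 1 - Pi.single d 1) (by simp)
    have h1b := h1 b
    have h2b := h2 b
    have h2d := h2 d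
    simp [hab.symm, hbd, had.symm] at h1b h2b h2d
    rcases h2b with h | h
    · simp [h] at h2d; exact hij h2d
    · simp [h] at h1b; exact hij h1b
  · obtain ⟨c, h⟩ := hmul (avg hn)
    have hJ : avg hn = (k⁻¹ * c) • K := by
      rw [mul_smul, ← h, hKJ, smul_smul, inv_mul_cancel₀ hk, one_smul]
    -- both `K` and `J` are nonzero idempotents on the same line
    have h3 : K * avg hn = avg hn := by rw [hJ, mul_smul_comm, hidem]
    have h4 : avg hn * avg hn = avg hn := by
      rw [mul_avg hn (avg hn) (c := 1), one_smul]
      intro i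
      have : (n : ℝ) ≠ 0 := by positivity
      simp [avg, this]
    have h5 : (k⁻¹ * c) • avg hn = (1 : ℝ) • avg hn := by
      conv_rhs => rw [one_smul, ← h4]
      conv_rhs =>
        enter [1]
        rw [hJ]
      rw [smul_mul_assoc, h3]
    have h6 := smul_left_injective ℝ (avg_ne_zero hn) h5
    rw [h6, one_smul] at hJ
    exact hJ.symm

/-- An automorphism preserves the common row and column sum. -/
theorem map_sums {n : ℕ} (hn : 3 ≤ n) (φ : spanDSAlg n ≃ₐ[ℝ] spanDSAlg n) (A : spanDSAlg n)
    {c : ℝ} (h : ∀ i, ∑ j, A.1 i j = c) :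
    (∀ i, ∑ j, (φ A).1 i j = c) ∧ ∀ j, ∑ i, (φ A).1 i j = c := by
  obtain ⟨d, hr, hc⟩ := (mem_iff _).1 (φ A).2
  have h1 : d • avg hn = c • avg hn := by
    rw [← mul_avg hn _ hr]
    conv_lhs => rw [← map_avg hn φ]
    rw [← map_mul, mul_avg hn A h, map_smul, map_avg]
  have h2 := smul_left_injective ℝ (avg_ne_zero hn) h1
  subst h2
  exact ⟨hr, hc⟩

/-! ### The conjugating matrix -/

/-- The Skolem–Noether map `x ↦ φ(x uᵀ) w` on `e^⊥`, extended by `0` on `e`. -/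
noncomputable def snMap {n : ℕ} (hn : 3 ≤ n) (φ : spanDSAlg n ≃ₐ[ℝ] spanDSAlg n)
    (u w : Fin n → ℝ) : (Fin n → ℝ) →ₗ[ℝ] (Fin n → ℝ) where
  toFun x := (φ (rankOne hn x u)).1 *ᵥ w
  map_add' x y := by
    have : rankOne hn (x + y) u = rankOne hn x u + rankOne hn y u := by
      ext i j
      simp [rankOne, vecMulVec_apply, cen, Finset.sum_add_distrib]
      ring
    simp [this, add_mulVec]
  map_smul' r x := by
    have : rankOne hn (r • x) u = r • rankOne hn x u := by
      ext i j
      simp [rankOne, vecMulVec_apply, cen, ← Finset.mul_sum]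
      ring
    simp [this, smul_mulVec]

theorem sum_row_rankOne {n : ℕ} (hn : 3 ≤ n) (x y : Fin n → ℝ) (i : Fin n) :
    ∑ j, (rankOne hn x y).1 i j = 0 := by
  simp [rankOne, vecMulVec_apply, ← Finset.mul_sum, sum_cen hn]

theorem sum_snMap {n : ℕ} (hn : 3 ≤ n) (φ : spanDSAlg n ≃ₐ[ℝ] spanDSAlg n)
    (u w x : Fin n → ℝ) : ∑ i, snMap hn φ u w x i = 0 := by
  change ∑ i, ((φ (rankOne hn x u)).1 *ᵥ w) i = 0
  rw [sum_mulVec (map_sums hn φ _ (sum_row_rankOne hn x u)).2, zero_mul]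

theorem exists_eigenvector {n : ℕ} (hn : 3 ≤ n) (φ : spanDSAlg n ≃ₐ[ℝ] spanDSAlg n)
    {u : Fin n → ℝ} (hu : ∑ i, u i = 0) (hu0 : u ≠ 0) (huu : u ⬝ᵥ u ≠ 0) :
    ∃ w : Fin n → ℝ, w ≠ 0 ∧ (φ (rankOne hn u u)).1 *ᵥ w = (u ⬝ᵥ u) • w := by
  have hE : φ (rankOne hn u u) ≠ 0 := by
    rw [ne_eq, EmbeddingLike.map_eq_zero_iff]
    intro h
    have h1 := congrArg (fun A : spanDSAlg n => A.1 *ᵥ u) h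
    simp [rankOne, cen_of_sum hu, vecMulVec_mulVec, huu, hu0] at h1
  obtain ⟨i, j, hij⟩ : ∃ i j, (φ (rankOne hn u u)).1 i j ≠ 0 := by
    by_contra! h
    exact hE (Subtype.ext (Matrix.ext h))
  -- a nonzero column of `φ(u uᵀ)`, whose square is `(u ⬝ u) φ(u uᵀ)`
  refine ⟨(φ (rankOne hn u u)).1 *ᵥ Pi.single j 1, fun h => hij ?_, ?_⟩
  · simpa using congrFun h i
  · have h2 : φ (rankOne hn u u) * φ (rankOne hn u u) = (u ⬝ᵥ u) • φ (rankOne hn u u) := by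
      rw [← map_mul, rankOne_mul_rankOne, cen_of_sum hu, map_smul]
    have h3 := congrArg Subtype.val h2
    rw [mulVec_mulVec, ← smul_mulVec]
    exact congrArg (· *ᵥ Pi.single j 1) h3

/-- A small enough multiple `w` of `w₀` makes all `φ(e_j uᵀ) w` have entries at most `1/n` in
absolute value. -/
theorem exists_small {n : ℕ} (hn : 3 ≤ n) (φ : spanDSAlg n ≃ₐ[ℝ] spanDSAlg n)
    (u : Fin n → ℝ) {w₀ : Fin n → ℝ} (hw₀ : w₀ ≠ 0)
    (hEw₀ : (φ (rankOne hn u u)).1 *ᵥ w₀ = (u ⬝ᵥ u) • w₀) :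
    ∃ w : Fin n → ℝ, w ≠ 0 ∧ (φ (rankOne hn u u)).1 *ᵥ w = (u ⬝ᵥ u) • w ∧
      ∀ i j, |snMap hn φ u w (Pi.single j 1) i| ≤ 1 / n := by
  have hn0 : (0 : ℝ) < n := by positivity
  obtain ⟨M, hM, hle⟩ : ∃ M : ℝ, 0 ≤ M ∧ ∀ i j, |snMap hn φ u w₀ (Pi.single j 1) i| ≤ M := by
    obtain ⟨M, h⟩ := (Set.finite_range fun p : Fin n × Fin n =>
      |snMap hn φ u w₀ (Pi.single p.2 1) p.1|).bddAbove
    have h' : ∀ i j, |snMap hn φ u w₀ (Pi.single j 1) i| ≤ M := fun i j => h ⟨(i, j), rfl⟩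
    exact ⟨M, (abs_nonneg _).trans (h' ⟨0, by omega⟩ ⟨0, by omega⟩), h'⟩
  have hε : 0 < 1 / (n * (M + 1)) := by positivity
  refine ⟨(1 / (n * (M + 1))) • w₀, smul_ne_zero hε.ne' hw₀, ?_, fun i j => ?_⟩
  · rw [mulVec_smul, hEw₀, smul_comm]
  · have : snMap hn φ u ((1 / (n * (M + 1))) • w₀) (Pi.single j 1) i
        = (1 / (n * (M + 1))) * snMap hn φ u w₀ (Pi.single j 1) i := by
      simp [snMap, mulVec_smul]
    rw [this, abs_mul, abs_of_pos hε]
    calc 1 / (n * (M + 1)) * |snMap hn φ u w₀ (Pi.single j 1) i|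
        ≤ 1 / (n * (M + 1)) * (M + 1) := by
          gcongr
          exact (hle i j).trans (by linarith)
      _ = 1 / n := by field_simp

theorem stmt8 (n : ℕ) (hn : 3 ≤ n) (φ : spanDSAlg n ≃ₐ[ℝ] spanDSAlg n) :
    ∃ P : Matrix (Fin n) (Fin n) ℝ, IsDS P ∧ IsUnit P ∧
      ∀ A : spanDSAlg n,
        (φ A : Matrix (Fin n) (Fin n) ℝ) = P * (A : Matrix (Fin n) (Fin n) ℝ) * P⁻¹ := by
  have hn0 : (0 : ℝ) < n := by positivity
  obtain ⟨u, hu, hu0⟩ : ∃ u : Fin n → ℝ, ∑ i, u i = 0 ∧ u ≠ 0 := by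
    refine ⟨Pi.single ⟨0, by omega⟩ 1 - Pi.single ⟨1, by omega⟩ 1, by simp, fun h => ?_⟩
    have := congrFun h ⟨0, by omega⟩
    simp at this
  have huu : u ⬝ᵥ u ≠ 0 := by simpa [dotProduct_self_eq_zero] using hu0
  obtain ⟨w₀, hw₀, hEw₀⟩ := exists_eigenvector hn φ hu hu0 huu
  obtain ⟨w, hw, hEw, hsmall⟩ := exists_small hn φ u hw₀ hEw₀
  let P : Matrix (Fin n) (Fin n) ℝ := LinearMap.toMatrix' (snMap hn φ u w) + (avg hn).1
  have hP : ∀ x, P *ᵥ x = snMap hn φ u w x + fun _ => (∑ k, x k) / n := by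
    intro x
    rw [add_mulVec, LinearMap.toMatrix'_mulVec]
    congr 1
    ext i
    simp [avg, mulVec, dotProduct, ← Finset.mul_sum, div_eq_inv_mul]
  have hPij : ∀ i j, P i j = snMap hn φ u w (Pi.single j 1) i + 1 / n := by
    intro i j
    have := congrFun (hP (Pi.single j 1)) i
    simpa using this
  clear_value P
  have hDS : IsDS P := by
    refine ⟨fun i j => ?_, fun i => ?_, fun j => ?_⟩
    · rw [hPij]
      linarith [(abs_le.1 (hsmall i j)).1]
    · have h1 : P *ᵥ (fun _ => (1 : ℝ)) = fun _ => 1 := by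
        rw [hP]
        have h2 : rankOne hn (fun _ => (1 : ℝ)) u = 0 := by
          ext i j
          simp [rankOne, vecMulVec_apply, cen, hn0.ne']
        ext i
        simp [snMap, h2, hn0.ne']
      simpa [mulVec, dotProduct] using congrFun h1 i
    · simp only [hPij, Finset.sum_add_distrib, sum_snMap]
      simp [hn0.ne']
  have hunit : IsUnit P := by
    rw [← mulVec_injective_iff_isUnit]
    apply (injective_iff_map_eq_zero (mulVecLin P)).2
    intro x hx
    rw [mulVecLin_apply] at hx
    have hs : ∑ i, x i = 0 := by
      have := sum_mulVec hDS.2.2 x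
      rw [hx] at this
      simpa using this.symm
    rw [hP, hs] at hx
    have hx' : (φ (rankOne hn x u)).1 *ᵥ w = 0 := by
      ext i
      simpa [snMap] using congrFun hx i
    have h1 : φ (rankOne hn u x) * φ (rankOne hn x u) = (x ⬝ᵥ x) • φ (rankOne hn u u) := by
      rw [← map_mul, rankOne_mul_rankOne, cen_of_sum hs, map_smul]
    have h2 : (φ (rankOne hn u x)).1 *ᵥ ((φ (rankOne hn x u)).1 *ᵥ w)
        = ((x ⬝ᵥ x) • (φ (rankOne hn u u)).1) *ᵥ w := by
      rw [mulVec_mulVec]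
      exact congrArg (fun A : spanDSAlg n => A.1 *ᵥ w) h1
    rw [hx', mulVec_zero, smul_mulVec, hEw] at h2
    have h3 := h2.symm
    simpa [hw, hu0, dotProduct_self_eq_zero] using h3
  refine ⟨P, hDS, hunit, fun A => ?_⟩
  have hcomm : P * A.1 = (φ A).1 * P := by
    obtain ⟨c, hr, hc⟩ := (mem_iff _).1 A.2
    apply Matrix.ext_of_mulVec_single
    intro j
    generalize (Pi.single j (1 : ℝ) : Fin n → ℝ) = x
    rw [← mulVec_mulVec, ← mulVec_mulVec, hP, hP, mulVec_add,
      mulVec_const (map_sums hn φ A hr).1, sum_mulVec hc]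
    congr 1
    · change (φ (rankOne hn (A.1 *ᵥ x) u)).1 *ᵥ w = (φ A).1 *ᵥ ((φ (rankOne hn x u)).1 *ᵥ w)
      rw [← mul_rankOne, map_mul, mulVec_mulVec]
      rfl
    · ext i
      ring
  rw [hcomm, mul_assoc, mul_nonsing_inv P ((isUnit_iff_isUnit_det P).1 hunit), mul_one]
end

section
/- Let n ≥ 2. Every unital ℝ-algebra automorphism φ of ⟨RS_n⟩ has the form φ(A) = P A P⁻¹ for all A ∈ ⟨RS_n⟩, for some invertible matrix P ∈ ⟨RS_n⟩. -/
/-!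
Write `e` for the all-ones vector and `J = {e vᵀ}` for the matrices with all rows equal. As a right
module over `⟨RS_n⟩`, `J` is the space of row vectors with its natural action, which determines a
matrix; and `J` is invariant under automorphisms, since it consists exactly of those `X` in the
algebra for which every left multiple `A X` is a scalar multiple of `X` (`exists_eq_rowElt`).

Hence an automorphism `φ` restricts to a linear bijection `v ↦ vᵀ Q` of row vectors, and comparing
`φ (e vᵀ A) = φ (e vᵀ) φ A` gives `A Q = Q φ A`, so that `P = Q⁻¹` implements `φ`. Taking `A = e vᵀ`
in that identity gives `Q e = e`, so `P` lies in the algebra.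
-/

open Matrix

/-- The unital subalgebra `⟨RS_n⟩` of `M_n(ℝ)` (the real linear span of the row
stochastic matrices). -/
def spanRSAlg (n : ℕ) : Subalgebra ℝ (Matrix (Fin n) (Fin n) ℝ) where
  carrier := {A | ∃ c : ℝ, A *ᵥ (fun _ => (1:ℝ)) = c • (fun _ => (1:ℝ))}
  mul_mem' := by
    rintro A B ⟨a, ha⟩ ⟨b, hb⟩
    exact ⟨a * b, by rw [← mulVec_mulVec, hb, mulVec_smul, ha, smul_smul, mul_comm b a]⟩
  one_mem' := ⟨1, by simp⟩
  add_mem' := by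
    rintro A B ⟨a, ha⟩ ⟨b, hb⟩
    exact ⟨a + b, by rw [add_mulVec, ha, hb, add_smul]⟩
  zero_mem' := ⟨0, by simp⟩
  algebraMap_mem' := by
    intro r
    refine ⟨r, ?_⟩
    ext i
    simp [Matrix.algebraMap_eq_diagonal, mulVec, dotProduct, Matrix.diagonal]

/-- The element `e vᵀ` of `⟨RS_n⟩`, all of whose rows are `v`. -/
def rowElt {n : ℕ} (v : Fin n → ℝ) : spanRSAlg n :=
  ⟨vecMulVec (fun _ => (1:ℝ)) v, ∑ i, v i, by
    ext i
    simp [mulVec, dotProduct, vecMulVec_apply]⟩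

lemma rowElt_apply {n : ℕ} (v : Fin n → ℝ) (i j : Fin n) :
    (rowElt v : Matrix (Fin n) (Fin n) ℝ) i j = v j := by
  simp [rowElt, vecMulVec_apply]

lemma rowElt_mul {n : ℕ} (v : Fin n → ℝ) (A : spanRSAlg n) :
    rowElt v * A = rowElt (v ᵥ* (A : Matrix (Fin n) (Fin n) ℝ)) := by
  ext i j
  simp [rowElt_apply, Matrix.mul_apply, vecMul, dotProduct]

lemma mul_rowElt {n : ℕ} (A : spanRSAlg n) (v : Fin n → ℝ) :
    ∃ c : ℝ, A * rowElt v = c • rowElt v := by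
  obtain ⟨A, c, hc⟩ := A
  refine ⟨c, ?_⟩
  ext i j
  have h := congrFun hc i
  simp only [mulVec, dotProduct, mul_one, Pi.smul_apply, smul_eq_mul] at h
  simp [rowElt_apply, Matrix.mul_apply, ← Finset.sum_mul, h]

/-- If every left multiple of `X` is a scalar multiple of `X`, then all rows of `X` are equal. -/
lemma exists_eq_rowElt {n : ℕ} (i₀ : Fin n) (X : spanRSAlg n)
    (hX : ∀ A : spanRSAlg n, ∃ c : ℝ, A * X = c • X) :
    X = rowElt ((X : Matrix (Fin n) (Fin n) ℝ) i₀) := by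
  ext i j
  rw [rowElt_apply]
  -- Left multiplication by `e (δ_i - δ_{i₀})ᵀ` gives the matrix all of whose rows are the
  -- difference `d` of rows `i` and `i₀` of `X`. As this matrix is `c X`, also `c d = d - d = 0`;
  -- so either `d = 0` at once, or `c = 0` and then `d = 0`.
  obtain ⟨c, hc⟩ := hX (rowElt (Pi.single i 1 - Pi.single i₀ 1))
  have key : ∀ k, (X : Matrix (Fin n) (Fin n) ℝ) i j - (X : Matrix (Fin n) (Fin n) ℝ) i₀ j
      = c * (X : Matrix (Fin n) (Fin n) ℝ) k j := by
    intro k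
    rw [rowElt_mul] at hc
    have h := congrFun (congrFun (congrArg Subtype.val hc) k) j
    rw [rowElt_apply] at h
    simpa [sub_vecMul] using h
  have h1 := key i
  have h2 := key i₀
  have h3 : c * ((X : Matrix (Fin n) (Fin n) ℝ) i j - (X : Matrix (Fin n) (Fin n) ℝ) i₀ j) = 0 := by
    linarith
  rcases mul_eq_zero.mp h3 with h | h
  · rw [h] at h1
    linarith
  · linarith

theorem stmt9 (n : ℕ) (hn : 2 ≤ n) (φ : spanRSAlg n ≃ₐ[ℝ] spanRSAlg n) :
    ∃ P : Matrix (Fin n) (Fin n) ℝ, P ∈ spanRSAlg n ∧ IsUnit P ∧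
      ∀ A : spanRSAlg n,
        (φ A : Matrix (Fin n) (Fin n) ℝ) = P * (A : Matrix (Fin n) (Fin n) ℝ) * P⁻¹ := by
  let i₀ : Fin n := ⟨0, by omega⟩
  let q : (Fin n → ℝ) →ₗ[ℝ] (Fin n → ℝ) :=
    { toFun := fun v => (φ (rowElt v) : Matrix (Fin n) (Fin n) ℝ) i₀
      map_add' := by
        intro v w
        have h : rowElt (v + w) = rowElt v + rowElt w := by
          ext i j
          simp [rowElt_apply]
        rw [h, map_add]
        rfl
      map_smul' := by
        intro c v
        have h : rowElt (c • v) = c • rowElt v := by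
          ext i j
          simp [rowElt_apply]
        rw [h, map_smul]
        rfl }
  have hq : ∀ v, φ (rowElt v) = rowElt (q v) := by
    intro v
    apply exists_eq_rowElt
    intro A
    obtain ⟨c, hc⟩ := mul_rowElt (φ.symm A) v
    refine ⟨c, ?_⟩
    have h := congrArg φ hc
    rwa [map_mul, map_smul, AlgEquiv.apply_symm_apply] at h
  have row_inj : Function.Injective (rowElt (n := n)) := by
    intro v w h
    ext j
    rw [← rowElt_apply v i₀ j, h, rowElt_apply]
  have q_inj : Function.Injective q := by
    intro v w h
    apply row_inj
    apply φ.injective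
    rw [hq, hq, h]
  let Q : Matrix (Fin n) (Fin n) ℝ := LinearMap.toMatrixRight' q
  have hQ : ∀ v, v ᵥ* Q = q v := by
    intro v
    rw [← Matrix.toLinearMapRight'_apply]
    simp [Q]
  have Q_unit : IsUnit Q := by
    rw [← Matrix.vecMul_injective_iff_isUnit]
    intro v w h
    exact q_inj (by simpa only [hQ] using h)
  have Q_det : IsUnit Q.det := (Matrix.isUnit_iff_isUnit_det Q).mp Q_unit
  have comm : ∀ A : spanRSAlg n,
      (A : Matrix (Fin n) (Fin n) ℝ) * Q = Q * (φ A : Matrix (Fin n) (Fin n) ℝ) := by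
    intro A
    apply Matrix.ext_of_single_vecMul
    intro i
    rw [← vecMul_vecMul, ← vecMul_vecMul, hQ, hQ]
    apply row_inj
    rw [← hq, ← rowElt_mul, map_mul, hq, rowElt_mul]
  have Q_e : Q *ᵥ (fun _ => (1:ℝ)) = fun _ => (1:ℝ) := by
    have hne : q (fun _ => 1) ≠ 0 := by
      intro h
      have := congrFun (q_inj (h.trans (map_zero q).symm)) i₀
      simp at this
    obtain ⟨j, hj⟩ := Function.ne_iff.mp hne
    -- With `w = q e ≠ 0`, the identity `A Q = Q φ A` at `A = e eᵀ` reads `e wᵀ = (Q e) wᵀ`.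
    have h := comm (rowElt (fun _ => 1))
    rw [hq] at h
    change vecMulVec _ _ * Q = Q * vecMulVec _ _ at h
    rw [vecMulVec_mul, mul_vecMulVec, hQ] at h
    ext i
    have h' := congrFun (congrFun h i) j
    rw [vecMulVec_apply, vecMulVec_apply] at h'
    exact (mul_right_cancel₀ hj h').symm
  refine ⟨Q⁻¹, ⟨1, ?_⟩, Matrix.isUnit_nonsing_inv_iff.mpr Q_unit, ?_⟩
  · conv_lhs => rw [← Q_e]
    rw [mulVec_mulVec, Matrix.nonsing_inv_mul _ Q_det, one_mulVec, one_smul]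
  · intro A
    rw [Matrix.nonsing_inv_nonsing_inv _ Q_det, mul_assoc, comm, ← mul_assoc,
      Matrix.nonsing_inv_mul _ Q_det, one_mul]
end

section
/- Let φ : DS_n → DS_n be a linear map. Then φ(A) and A have the same characteristic polynomial for every A ∈ DS_n if and only if there exists a permutation matrix P ∈ P_n such that either φ(A) = P A Pᵀ for all A ∈ DS_n, or φ(A) = P Aᵀ Pᵀ for all A ∈ DS_n. -/
/-!
A map `φ` that preserves `DS_n` and characteristic polynomials permutes the permutation matrices:
`tr (A ^ m)` depends only on the characteristic polynomial of `A`, so if `P ^ m = 1` for a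
permutation matrix `P`, then `φ(P) ^ m` is doubly stochastic of trace `n`, hence is `1`. A doubly
stochastic matrix with a doubly stochastic inverse is a permutation matrix, so `φ` induces a map
`f` on permutations; `f` fixes `1`, and it is injective because `tr (A ^ 2)` is preserved at
`A = (P_σ + P_{σ⁻¹}) / 2` and at `A = (P_τ + P_{σ⁻¹}) / 2`.

For `n ≥ 3` (smaller `n` are immediate) the crucial step is that each entry of `φ(A)` is an entry
of `A` (`exists_entry_imp`, `exists_entry_iff`). If for every cell
`(i, j)` some permutation through `(i, j)` had `φ(P)_{kl} = 0`, then the sum `S` of these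
`n²` permutation matrices would have all entries at least `1`, so for every `τ` the matrix
`S - P_τ` would be a multiple of a doubly stochastic one, and `0 ≤ φ(S)_{kl} - φ(P_τ)_{kl}` would
force `φ(P_τ)_{kl} = 0` for all `τ`, contradicting surjectivity of `f`. Hence some cell `(i, j)`
satisfies `σ i = j → f σ k = l`, and since all these sets of permutations have the same size, this
implication is an equivalence.

The resulting map `(k, l) ↦ (i, j)` on cells sends two cells of a common line to two cells of a
common line and the diagonal to the diagonal, so it is `(k, l) ↦ (p k, p l)` or
`(k, l) ↦ (p l, p k)` for a permutation `p` (`exists_perm_of_entries`). Birkhoff's theorem extends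
the conclusion from permutation matrices to all of `DS_n`.
-/

open Matrix

/-! ### Characteristic polynomials and traces of powers -/

open Polynomial in
/-- Both sides are products of values of the characteristic polynomial over the roots of `p`. -/
lemma det_aeval_eq_of_charpoly_eq {n : ℕ} {A B : Matrix (Fin n) (Fin n) ℂ}
    (h : A.charpoly = B.charpoly) (p : ℂ[X]) : (aeval A p).det = (aeval B p).det := by
  have key : ∀ M : Matrix (Fin n) (Fin n) ℂ, (aeval M p).det =
      p.leadingCoeff ^ n * (p.roots.map fun a => (-1) ^ n * M.charpoly.eval a).prod := by
    intro M
    let F : ℂ[X] →* ℂ := Matrix.detMonoidHom.comp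
      ((aeval M : ℂ[X] →ₐ[ℂ] Matrix (Fin n) (Fin n) ℂ) : ℂ[X] →* Matrix (Fin n) (Fin n) ℂ)
    have hF : ∀ q, F q = (aeval M q).det := fun q => rfl
    have hlin : ∀ a, F (X - C a) = (-1) ^ n * M.charpoly.eval a := by
      intro a
      rw [hF, Matrix.eval_charpoly, ← neg_sub, map_neg, Matrix.det_neg]
      simp [Matrix.algebraMap_eq_diagonal, Matrix.scalar_apply, Pi.algebraMap_def]
    rw [← hF]
    conv_lhs => rw [(IsAlgClosed.splits p).eq_prod_roots]
    rw [map_mul, map_multiset_prod, Multiset.map_map]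
    congr 1
    · rw [hF]
      simp [Matrix.algebraMap_eq_diagonal, Matrix.det_diagonal]
    · congr 1
      exact Multiset.map_congr rfl fun a _ => hlin a
  rw [key, key, h]

open Polynomial in
lemma charpoly_pow_eq_of_charpoly_eq {n : ℕ} {A B : Matrix (Fin n) (Fin n) ℂ}
    (h : A.charpoly = B.charpoly) (m : ℕ) : (A ^ m).charpoly = (B ^ m).charpoly := by
  refine Polynomial.funext fun x => ?_
  rw [Matrix.eval_charpoly, Matrix.eval_charpoly]
  have h1 := det_aeval_eq_of_charpoly_eq h (C x - X ^ m)
  rwa [_root_.map_sub, _root_.map_sub, _root_.map_pow, _root_.map_pow, aeval_X, aeval_X,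
    aeval_C, aeval_C] at h1

lemma trace_pow_eq_of_charpoly_eq {n : ℕ} {A B : Matrix (Fin n) (Fin n) ℝ}
    (h : A.charpoly = B.charpoly) (m : ℕ) : (A ^ m).trace = (B ^ m).trace := by
  have h' : (A.map Complex.ofRealHom).charpoly = (B.map Complex.ofRealHom).charpoly := by
    rw [Matrix.charpoly_map, Matrix.charpoly_map, h]
  have h2 := charpoly_pow_eq_of_charpoly_eq h' m
  rw [← Matrix.map_pow, ← Matrix.map_pow, Matrix.charpoly_map, Matrix.charpoly_map] at h2
  have h3 := Polynomial.map_injective _ Complex.ofRealHom.injective h2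
  rcases Nat.eq_zero_or_pos n with rfl | hn
  · simp [Matrix.trace]
  · have : Nonempty (Fin n) := ⟨⟨0, hn⟩⟩
    rw [Matrix.trace_eq_neg_charpoly_coeff, Matrix.trace_eq_neg_charpoly_coeff, h3]

/-! ### Doubly stochastic matrices and permutation matrices -/

lemma isDS_iff {n : ℕ} (A : Matrix (Fin n) (Fin n) ℝ) :
    IsDS A ↔ A ∈ doublyStochastic ℝ (Fin n) := mem_doublyStochastic_iff_sum.symm

lemma isDS_perm {n : ℕ} (σ : Equiv.Perm (Fin n)) : IsDS (σ.permMatrix ℝ) :=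
  (isDS_iff _).2 permMatrix_mem_doublyStochastic

lemma IsDS.avg {n : ℕ} {A B : Matrix (Fin n) (Fin n) ℝ} (hA : IsDS A) (hB : IsDS B) :
    IsDS ((1 / 2 : ℝ) • (A + B)) := by
  rw [isDS_iff] at *
  rw [smul_add]
  exact convex_doublyStochastic hA hB (by norm_num) (by norm_num) (by norm_num)

lemma perm_apply {n : ℕ} (σ : Equiv.Perm (Fin n)) (i j : Fin n) :
    σ.permMatrix ℝ i j = if σ i = j then 1 else 0 := by
  simp [Equiv.Perm.permMatrix, PEquiv.toMatrix_apply, Equiv.toPEquiv_apply, eq_comm]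

lemma perm_inj {n : ℕ} {σ τ : Equiv.Perm (Fin n)}
    (h : σ.permMatrix ℝ = τ.permMatrix ℝ) : σ = τ := by
  ext i
  have := congrFun (congrFun h i) (τ i)
  rw [perm_apply, perm_apply, if_pos rfl] at this
  split_ifs at this with h1
  · rw [h1]
  · norm_num at this

lemma perm_pow {n : ℕ} (σ : Equiv.Perm (Fin n)) (m : ℕ) :
    (σ.permMatrix ℝ) ^ m = (σ ^ m).permMatrix ℝ := by
  induction m with
  | zero => simp
  | succ m ih => rw [pow_succ, ih, pow_succ', Matrix.permMatrix_mul]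

lemma IsDS.eq_one_of_trace {n : ℕ} {A : Matrix (Fin n) (Fin n) ℝ} (hA : IsDS A)
    (h : A.trace = n) : A = 1 := by
  have hle : ∀ i, A i i ≤ 1 := fun i => le_one_of_mem_doublyStochastic ((isDS_iff A).1 hA)
  have hd : ∀ i, A i i = 1 := by
    have : ∑ i, (1 - A i i) = 0 := by
      rw [Finset.sum_sub_distrib]
      simp only [Matrix.trace, Matrix.diag] at h
      simp [h]
    rw [Finset.sum_eq_zero_iff_of_nonneg fun i _ => sub_nonneg.2 (hle i)] at this
    intro i
    linarith [this i (Finset.mem_univ i)]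
  ext i j
  by_cases hij : i = j
  · subst hij
    simp [hd]
  · rw [Matrix.one_apply_ne hij]
    have h1 := hA.2.1 i
    rw [← Finset.add_sum_erase _ _ (Finset.mem_univ i), hd] at h1
    have h2 : ∑ x ∈ Finset.univ.erase i, A i x = 0 := by linarith
    rw [Finset.sum_eq_zero_iff_of_nonneg fun x _ => hA.1 i x] at h2
    exact h2 j (by simp [Ne.symm hij])

/-- From `∑ j, A i j * B j i = 1 = ∑ j, A i j` and `B ≤ 1`, each `j` in the support of row `i`
of `A` has `B j i = 1`; a column of `B` has only one such entry. -/
lemma IsDS.perm_of_inverse {n : ℕ} {A B : Matrix (Fin n) (Fin n) ℝ} (hA : IsDS A) (hB : IsDS B)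
    (h : A * B = 1) : ∃ σ : Equiv.Perm (Fin n), A = σ.permMatrix ℝ := by
  have hle : ∀ i j, B i j ≤ 1 := fun i j => le_one_of_mem_doublyStochastic ((isDS_iff B).1 hB)
  have key : ∀ i j, A i j ≠ 0 → B j i = 1 := by
    intro i j hij
    have h1 : ∑ j, A i j * B j i = 1 := by
      have := congrFun (congrFun h i) i
      rwa [Matrix.mul_apply, Matrix.one_apply_eq] at this
    have h2 : ∑ j, A i j * (1 - B j i) = 0 := by
      simp only [mul_sub, mul_one, Finset.sum_sub_distrib, h1, hA.2.1 i, sub_self]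
    rw [Finset.sum_eq_zero_iff_of_nonneg
      fun x _ => mul_nonneg (hA.1 i x) (sub_nonneg.2 (hle x i))] at h2
    rcases mul_eq_zero.1 (h2 j (Finset.mem_univ j)) with h3 | h3
    · exact absurd h3 hij
    · linarith
  have uniq : ∀ i j j', B j i = 1 → B j' i = 1 → j = j' := by
    intro i j j' h1 h2
    by_contra hne
    have h3 := Finset.sum_le_sum_of_subset_of_nonneg (f := fun x => B x i)
      (Finset.subset_univ {j, j'}) (fun x _ _ => hB.1 x i)
    rw [hB.2.2 i, Finset.sum_pair hne] at h3
    linarith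
  have ex : ∀ i, ∃ j, A i j ≠ 0 := by
    intro i
    by_contra hcon
    push Not at hcon
    have := hA.2.1 i
    simp [hcon] at this
  choose s hs using ex
  have hA' : ∀ i j, A i j = if s i = j then 1 else 0 := by
    intro i j
    have hz : ∀ j, s i ≠ j → A i j = 0 := by
      intro j hj
      by_contra h0
      exact hj (uniq i _ _ (key i _ (hs i)) (key i j h0))
    split_ifs with hj
    · subst hj
      have h1 := hA.2.1 i
      rwa [Finset.sum_eq_single (s i) (fun b _ hb => hz b hb.symm) (by simp)] at h1
    · exact hz j hj
  have surj : Function.Surjective s := by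
    intro j
    by_contra hcon
    push Not at hcon
    have := hA.2.2 j
    simp [hA', hcon] at this
  refine ⟨Equiv.ofBijective s (Finite.surjective_iff_bijective.1 surj), ?_⟩
  ext i j
  rw [hA', perm_apply]
  rfl

lemma perm_conj {n : ℕ} (p : Equiv.Perm (Fin n)) (A : Matrix (Fin n) (Fin n) ℝ) :
    p.permMatrix ℝ * A * (p.permMatrix ℝ)ᵀ = A.submatrix p p := by
  ext i j
  simp [Matrix.mul_apply, Equiv.symm_apply_eq]

/-! ### Maps on permutations whose entries are entries -/

lemma exists_perm_two {n : ℕ} {i j i' j' : Fin n} (hi : i ≠ i') (hj : j ≠ j') :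
    ∃ σ : Equiv.Perm (Fin n), σ i = j ∧ σ i' = j' := by
  refine ⟨Equiv.swap j' (Equiv.swap i j i') * Equiv.swap i j, ?_, ?_⟩
  · rw [Equiv.Perm.mul_apply, Equiv.swap_apply_left, Equiv.swap_apply_of_ne_of_ne hj]
    intro h
    exact hi ((Equiv.swap i j).injective ((Equiv.swap_apply_left i j).trans h))
  · rw [Equiv.Perm.mul_apply, Equiv.swap_apply_right]

lemma card_perm_through {n : ℕ} (i j k l : Fin n) :
    (Finset.univ.filter fun σ : Equiv.Perm (Fin n) => σ i = j).card =
      (Finset.univ.filter fun σ : Equiv.Perm (Fin n) => σ k = l).card := by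
  refine Finset.card_equiv
    ((Equiv.mulLeft (Equiv.swap l j)).trans (Equiv.mulRight (Equiv.swap i k))) fun σ => ?_
  simp only [Finset.mem_filter, Finset.mem_univ, true_and, Equiv.trans_apply,
    Equiv.coe_mulLeft, Equiv.coe_mulRight, Equiv.Perm.mul_apply, Equiv.swap_apply_right]
  rw [Equiv.swap_apply_eq_iff, Equiv.swap_apply_left]

/-- An injective `f` fixing `1` such that every condition `f σ k = l` is a condition of the form
`σ i = j` is a conjugation, possibly composed with inversion. -/
lemma exists_perm_of_entries {n : ℕ} (hn : 3 ≤ n) (f : Equiv.Perm (Fin n) → Equiv.Perm (Fin n))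
    (hf : Function.Injective f) (f1 : f 1 = 1)
    (H : ∀ k l, ∃ i j, ∀ σ, σ i = j ↔ f σ k = l) :
    ∃ p : Equiv.Perm (Fin n), (∀ σ k l, f σ k = l ↔ σ (p k) = p l) ∨
      (∀ σ k l, f σ k = l ↔ σ (p l) = p k) := by
  have fs : Function.Surjective f := Finite.injective_iff_surjective.1 hf
  choose a b hab using H
  have third : ∀ k l : Fin n, ∃ m, m ≠ k ∧ m ≠ l := by
    intro k l
    obtain ⟨m, hm⟩ := Finset.exists_mem_notMem_of_card_lt_card
      (s := {k, l}) (t := Finset.univ) (by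
        have := Finset.card_le_two (a := k) (b := l)
        simp only [Finset.card_univ, Fintype.card_fin]
        omega)
    exact ⟨m, by grind⟩
  -- Distinct cells in a common row or column go to distinct cells in a common row or column.
  have share : ∀ k l k' l', (k = k' ∧ l ≠ l' ∨ k ≠ k' ∧ l = l') →
      (a k l = a k' l' ∧ b k l ≠ b k' l' ∨ a k l ≠ a k' l' ∧ b k l = b k' l') := by
    intro k l k' l' h
    have h1 : ∀ σ : Equiv.Perm (Fin n), ¬ (σ (a k l) = b k l ∧ σ (a k' l') = b k' l') := by
      rintro σ ⟨h2, h3⟩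
      rw [hab] at h2 h3
      rcases h with ⟨rfl, h⟩ | ⟨h, rfl⟩
      · exact h (h2.symm.trans h3)
      · exact h ((f σ).injective (h2.trans h3.symm))
    by_cases ha : a k l = a k' l' <;> by_cases hb : b k l = b k' l'
    · exact absurd ⟨Equiv.swap_apply_left _ _, by rw [ha, hb, Equiv.swap_apply_left]⟩
        (h1 (Equiv.swap (a k l) (b k l)))
    · exact Or.inl ⟨ha, hb⟩
    · exact Or.inr ⟨ha, hb⟩
    · obtain ⟨σ, hσ⟩ := exists_perm_two ha hb
      exact absurd hσ (h1 σ)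
  have diag : ∀ k, b k k = a k k := by
    intro k
    have := (hab k k 1).2 (by rw [f1]; rfl)
    exact this.symm
  have pinj : Function.Injective fun k => a k k := by
    intro k k' h
    by_contra hne
    obtain ⟨m, hm, hm'⟩ := third k k'
    obtain ⟨σ, hσ⟩ := fs (Equiv.swap k' m)
    have h1 := hab k k σ
    have h2 := hab k' k' σ
    simp only at h
    rw [diag] at h1 h2
    rw [h] at h1
    rw [hσ] at h1 h2
    rw [Equiv.swap_apply_of_ne_of_ne hne hm.symm] at h1
    rw [Equiv.swap_apply_left] at h2
    exact hm' (h2.1 (h1.2 rfl))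
  obtain ⟨p, hp⟩ : ∃ p : Equiv.Perm (Fin n), ∀ k, p k = a k k :=
    ⟨Equiv.ofBijective _ (Finite.injective_iff_bijective.1 pinj), fun k => rfl⟩
  have hpb : ∀ k, b k k = p k := fun k => by rw [diag, hp]
  have pne : ∀ {k l}, k ≠ l → p k ≠ p l := fun h h' => h (p.injective h')
  have orient : ∀ k l, k ≠ l →
      (a k l = p k ∧ b k l = p l ∨ a k l = p l ∧ b k l = p k) := by
    intro k l hkl
    have h1 := share k l k k (Or.inl ⟨rfl, hkl.symm⟩)
    have h2 := share k l l l (Or.inr ⟨hkl, rfl⟩)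
    have h3 := pne hkl
    rw [hpb, ← hp] at h1 h2
    grind
  have row : ∀ k l m, k ≠ l → k ≠ m → a k l = p k → a k m = p k := by
    intro k l m hl hm h
    by_cases hlm : l = m
    · rwa [← hlm]
    have h1 := share k l k m (Or.inl ⟨rfl, hlm⟩)
    have := orient k l hl
    have := orient k m hm
    have := pne hl
    have := pne hm
    grind
  have col : ∀ k l m, k ≠ l → m ≠ l → a k l = p k → a m l = p m := by
    intro k l m hl hm h
    by_cases hlm : k = m
    · rwa [← hlm]
    have h1 := share k l m l (Or.inr ⟨hlm, rfl⟩)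
    have := orient k l hl
    have := orient m l hm
    have := pne hl
    have := pne hm
    grind
  have glob : ∀ k l k' l', k ≠ l → k' ≠ l' → a k l = p k → a k' l' = p k' := by
    intro k l k' l' h h' hk
    obtain ⟨m, hm, hm'⟩ := third k k'
    exact row _ _ _ hm'.symm h' (col _ _ _ hm.symm hm'.symm (row _ _ _ h hm.symm hk))
  refine ⟨p, ?_⟩
  by_cases hc : ∃ k l, k ≠ l ∧ a k l = p k
  · obtain ⟨k₀, l₀, h0, h1⟩ := hc
    left
    intro σ k l
    rw [← hab k l σ]
    by_cases hkl : k = l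
    · subst hkl
      rw [hpb, ← hp]
    · have h2 := glob _ _ _ _ h0 hkl h1
      have := orient k l hkl
      have := pne hkl
      grind
  · push Not at hc
    right
    intro σ k l
    rw [← hab k l σ]
    by_cases hkl : k = l
    · subst hkl
      rw [hpb, ← hp]
    · have := orient k l hkl
      have := hc k l hkl
      grind

/-! ### Linear maps preserving doubly stochastic matrices -/

/-- If every cell `(i, j)` had a permutation through it with zero image at `(k, l)`, the sum of
these would dominate every permutation matrix entrywise and still have zero image at `(k, l)`. -/
lemma exists_entry_imp {n : ℕ} (hn : 3 ≤ n)
    (φ : Matrix (Fin n) (Fin n) ℝ →ₗ[ℝ] Matrix (Fin n) (Fin n) ℝ)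
    (hφ : ∀ A, IsDS A → IsDS (φ A)) (f : Equiv.Perm (Fin n) → Equiv.Perm (Fin n))
    (hf : ∀ σ, φ (σ.permMatrix ℝ) = (f σ).permMatrix ℝ) (fs : Function.Surjective f)
    (k l : Fin n) : ∃ i j, ∀ σ, σ i = j → f σ k = l := by
  by_contra hcon
  push Not at hcon
  choose s hs hs' using hcon
  obtain ⟨τ, hτ⟩ := fs (Equiv.swap k l)
  have hτ' : f τ k = l := by rw [hτ, Equiv.swap_apply_left]
  set S : Matrix (Fin n) (Fin n) ℝ := ∑ i, ∑ j, (s i j).permMatrix ℝ with hS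
  have hpos : (0 : ℝ) < (n : ℝ) * n - 1 := by
    have : (3 : ℝ) ≤ n := by exact_mod_cast hn
    nlinarith
  have hSapp : ∀ x y, S x y = ∑ i, ∑ j, (s i j).permMatrix ℝ x y := by
    intro x y
    simp only [hS, Matrix.sum_apply]
  have hge : ∀ x y, 1 ≤ S x y := by
    intro x y
    have h1 : (s x y).permMatrix ℝ x y = 1 := by rw [perm_apply, if_pos (hs x y)]
    rw [hSapp, ← h1]
    calc (s x y).permMatrix ℝ x y ≤ ∑ j, (s x j).permMatrix ℝ x y :=
          Finset.single_le_sum (f := fun j => (s x j).permMatrix ℝ x y)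
            (fun j _ => (isDS_perm _).1 _ _) (Finset.mem_univ y)
      _ ≤ _ := Finset.single_le_sum (f := fun i => ∑ j, (s i j).permMatrix ℝ x y)
            (fun i _ => Finset.sum_nonneg fun j _ => (isDS_perm _).1 _ _) (Finset.mem_univ x)
  have hB : IsDS (((n : ℝ) * n - 1)⁻¹ • (S - τ.permMatrix ℝ)) := by
    refine ⟨fun x y => ?_, fun x => ?_, fun y => ?_⟩
    · refine mul_nonneg (inv_nonneg.2 hpos.le) ?_
      have h1 := hge x y
      have h2 : τ.permMatrix ℝ x y ≤ 1 :=
        le_one_of_mem_doublyStochastic ((isDS_iff _).1 (isDS_perm τ))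
      rw [Matrix.sub_apply]
      linarith
    · simp only [Matrix.smul_apply, Matrix.sub_apply, smul_eq_mul, ← Finset.mul_sum,
        Finset.sum_sub_distrib, (isDS_perm τ).2.1, hSapp]
      rw [Finset.sum_comm]
      simp_rw [Finset.sum_comm (s := Finset.univ (α := Fin n)) (t := Finset.univ (α := Fin n))
        (f := fun y j => (s _ j).permMatrix ℝ x y)]
      simp only [(isDS_perm _).2.1]
      simp [hpos.ne']
    · simp only [Matrix.smul_apply, Matrix.sub_apply, smul_eq_mul, ← Finset.mul_sum,
        Finset.sum_sub_distrib, (isDS_perm τ).2.2, hSapp]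
      rw [Finset.sum_comm]
      simp_rw [Finset.sum_comm (s := Finset.univ (α := Fin n)) (t := Finset.univ (α := Fin n))
        (f := fun x j => (s _ j).permMatrix ℝ x y)]
      simp only [(isDS_perm _).2.2]
      simp [hpos.ne']
  have h1 := (hφ _ hB).1 k l
  have h2 : φ S k l = 0 := by
    simp only [hS, map_sum, hf, Matrix.sum_apply, perm_apply, if_neg (hs' _ _),
      Finset.sum_const_zero]
  rw [map_smul, map_sub, hf, Matrix.smul_apply, Matrix.sub_apply, h2, perm_apply, if_pos hτ',
    smul_eq_mul] at h1
  have := inv_pos.2 hpos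
  linarith

lemma exists_entry_iff {n : ℕ} (hn : 3 ≤ n)
    (φ : Matrix (Fin n) (Fin n) ℝ →ₗ[ℝ] Matrix (Fin n) (Fin n) ℝ)
    (hφ : ∀ A, IsDS A → IsDS (φ A)) (f : Equiv.Perm (Fin n) → Equiv.Perm (Fin n))
    (hf : ∀ σ, φ (σ.permMatrix ℝ) = (f σ).permMatrix ℝ) (fi : Function.Injective f)
    (k l : Fin n) : ∃ i j, ∀ σ, σ i = j ↔ f σ k = l := by
  obtain ⟨i, j, h⟩ :=
    exists_entry_imp hn φ hφ f hf (Finite.injective_iff_surjective.1 fi) k l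
  refine ⟨i, j, fun σ => ⟨h σ, fun hσ => ?_⟩⟩
  have himg : (Finset.univ.filter fun σ : Equiv.Perm (Fin n) => σ i = j).image f =
      Finset.univ.filter fun σ : Equiv.Perm (Fin n) => σ k = l := by
    apply Finset.eq_of_subset_of_card_le
    · intro τ hτ
      simp only [Finset.mem_image, Finset.mem_filter, Finset.mem_univ, true_and] at hτ ⊢
      obtain ⟨ρ, hρ, rfl⟩ := hτ
      exact h ρ hρ
    · rw [Finset.card_image_of_injective _ fi, card_perm_through i j k l]
  have hmem : f σ ∈ Finset.univ.filter fun σ : Equiv.Perm (Fin n) => σ k = l := by simpa using hσ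
  rw [← himg] at hmem
  obtain ⟨ρ, hρ, hρσ⟩ := Finset.mem_image.1 hmem
  rw [← fi hρσ]
  simpa using hρ

lemma eq_of_eq_on_perm {n : ℕ}
    {φ ψ : Matrix (Fin n) (Fin n) ℝ →ₗ[ℝ] Matrix (Fin n) (Fin n) ℝ}
    (h : ∀ σ : Equiv.Perm (Fin n), φ (σ.permMatrix ℝ) = ψ (σ.permMatrix ℝ))
    {A : Matrix (Fin n) (Fin n) ℝ} (hA : IsDS A) : φ A = ψ A := by
  obtain ⟨w, -, -, rfl⟩ := exists_eq_sum_perm_of_mem_doublyStochastic ((isDS_iff A).1 hA)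
  simp only [map_sum, map_smul, h]

/-- A spectrum-preserving map sends permutation matrices to permutation matrices: if
`P_σ ^ m = 1`, then `φ(P_σ) ^ m` is doubly stochastic of trace `n`, hence the identity. -/
lemma exists_perm_image {n : ℕ}
    (φ : Matrix (Fin n) (Fin n) ℝ →ₗ[ℝ] Matrix (Fin n) (Fin n) ℝ)
    (hφ : ∀ A, IsDS A → IsDS (φ A)) (hc : ∀ A, IsDS A → (φ A).charpoly = A.charpoly)
    (σ : Equiv.Perm (Fin n)) :
    ∃ τ : Equiv.Perm (Fin n), φ (σ.permMatrix ℝ) = τ.permMatrix ℝ := by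
  have hds := hφ _ (isDS_perm σ)
  have hpow : ∀ m, IsDS (φ (σ.permMatrix ℝ) ^ m) := fun m =>
    (isDS_iff _).2 (pow_mem ((isDS_iff _).1 hds) m)
  refine hds.perm_of_inverse (hpow (orderOf σ - 1)) ?_
  rw [mul_pow_sub_one (orderOf_pos σ).ne']
  refine (hpow _).eq_one_of_trace ?_
  rw [trace_pow_eq_of_charpoly_eq (hc _ (isDS_perm σ)), perm_pow, pow_orderOf_eq_one]
  simp

/-- Compares `tr (A ^ 2)` at the averages of `P_{σ⁻¹}` with `P_σ` and with `P_τ`, which have the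
same image. -/
lemma eq_of_image_eq {n : ℕ}
    (φ : Matrix (Fin n) (Fin n) ℝ →ₗ[ℝ] Matrix (Fin n) (Fin n) ℝ)
    (hc : ∀ A, IsDS A → (φ A).charpoly = A.charpoly) {σ τ : Equiv.Perm (Fin n)}
    (h : φ (σ.permMatrix ℝ) = φ (τ.permMatrix ℝ)) : σ = τ := by
  set R := (σ⁻¹).permMatrix ℝ with hR
  have e0 : ∀ ρ : Equiv.Perm (Fin n), IsDS ((1 / 2 : ℝ) • (ρ.permMatrix ℝ + R)) :=
    fun ρ => (isDS_perm ρ).avg (isDS_perm _)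
  have e1 : ((1 / 2 : ℝ) • (σ.permMatrix ℝ + R)).charpoly =
      ((1 / 2 : ℝ) • (τ.permMatrix ℝ + R)).charpoly := by
    rw [← hc _ (e0 σ), ← hc _ (e0 τ)]
    simp only [map_smul, map_add, h]
  have e2 := trace_pow_eq_of_charpoly_eq e1 2
  have e3 : (σ.permMatrix ℝ).charpoly = (τ.permMatrix ℝ).charpoly := by
    rw [← hc _ (isDS_perm σ), ← hc _ (isDS_perm τ), h]
  have e4 := trace_pow_eq_of_charpoly_eq e3 2
  have expand : ∀ A : Matrix (Fin n) (Fin n) ℝ, (((1 / 2 : ℝ) • (A + R)) ^ 2).trace =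
      1 / 4 * ((A ^ 2).trace + 2 * (A * R).trace + (R ^ 2).trace) := by
    intro A
    rw [smul_pow, Matrix.trace_smul, pow_two, pow_two, pow_two, pow_two, add_mul, mul_add, mul_add]
    simp only [Matrix.trace_add, Matrix.trace_mul_comm R A, smul_eq_mul]
    ring
  rw [expand, expand, e4] at e2
  have e5 : (τ.permMatrix ℝ * R).trace = (σ.permMatrix ℝ * R).trace := by linarith
  rw [hR, ← Matrix.permMatrix_mul, ← Matrix.permMatrix_mul, inv_mul_cancel,
    Matrix.permMatrix_one, Matrix.trace_one, Fintype.card_fin] at e5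
  have e6 := (isDS_perm _).eq_one_of_trace e5
  rw [← Matrix.permMatrix_one] at e6
  have e7 := perm_inj e6
  exact inv_mul_eq_one.1 e7

theorem stmt11 (n : ℕ) (hn : 0 < n)
    (φ : Matrix (Fin n) (Fin n) ℝ →ₗ[ℝ] Matrix (Fin n) (Fin n) ℝ)
    (hφ : ∀ A, IsDS A → IsDS (φ A)) :
    (∀ A, IsDS A → (φ A).charpoly = A.charpoly) ↔
    (∃ P : Matrix (Fin n) (Fin n) ℝ, IsPerm P ∧
      ((∀ A, IsDS A → φ A = P * A * Pᵀ) ∨ (∀ A, IsDS A → φ A = P * Aᵀ * Pᵀ))) := by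
  constructor
  · intro hc
    choose f hf using exists_perm_image φ hφ hc
    have fi : Function.Injective f := fun σ τ h =>
      eq_of_image_eq φ hc (by rw [hf, hf, h])
    have f1 : f 1 = 1 := by
      apply perm_inj
      rw [← hf]
      have h1 := (hφ _ (isDS_perm 1)).eq_one_of_trace (by
        have := trace_pow_eq_of_charpoly_eq (hc _ (isDS_perm 1)) 1
        rw [pow_one, pow_one] at this
        rw [this]
        simp)
      rw [h1, Matrix.permMatrix_one]
    obtain ⟨p, hp⟩ : ∃ p : Equiv.Perm (Fin n), (∀ σ k l, f σ k = l ↔ σ (p k) = p l) ∨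
        (∀ σ k l, f σ k = l ↔ σ (p l) = p k) := by
      by_cases hn3 : 3 ≤ n
      · exact exists_perm_of_entries hn3 f fi f1 (exists_entry_iff hn3 φ hφ f hf fi)
      · -- There is at most one non-identity permutation, so `f` is the identity.
        have two : ∀ σ τ : Equiv.Perm (Fin n), σ ≠ 1 → τ ≠ 1 → σ = τ := by
          obtain rfl | rfl : n = 1 ∨ n = 2 := by omega
          · decide
          · decide
        refine ⟨1, Or.inl fun σ k l => ?_⟩
        have : f σ = σ := by
          by_cases h : σ = 1
          · rw [h, f1]
          · exact two _ _ (fun h' => h (fi (h'.trans f1.symm))) h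
        rw [this]
        rfl
    refine ⟨p.permMatrix ℝ, ⟨p, rfl⟩, ?_⟩
    let ψ : Matrix (Fin n) (Fin n) ℝ →ₗ[ℝ] Matrix (Fin n) (Fin n) ℝ :=
      (Matrix.reindexLinearEquiv ℝ ℝ p.symm p.symm).toLinearMap
    have hψ : ∀ A, ψ A = A.submatrix p p := fun A => rfl
    simp only [perm_conj]
    refine hp.imp (fun h A hA => ?_) (fun h A hA => ?_)
    · refine eq_of_eq_on_perm (ψ := ψ) (fun σ => ?_) hA
      rw [hf, hψ]
      ext k l
      simp only [Matrix.submatrix_apply, perm_apply, h σ k l]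
    · refine eq_of_eq_on_perm
        (ψ := ψ ∘ₗ (Matrix.transposeLinearEquiv (Fin n) (Fin n) ℝ ℝ).toLinearMap)
        (fun σ => ?_) hA
      rw [hf]
      ext k l
      change _ = σ.permMatrix ℝ (p l) (p k)
      simp only [perm_apply, h σ k l]
  · rintro ⟨P, ⟨p, rfl⟩, h⟩ A hA
    rcases h with h | h
    · rw [h A hA, perm_conj]
      exact Matrix.charpoly_reindex p.symm A
    · rw [h A hA, perm_conj, ← Matrix.charpoly_transpose A]
      exact Matrix.charpoly_reindex p.symm Aᵀ
end

section
/- Let m ≥ 3 and let φ₁, …, φ_m : DS_n → DS_n be maps. The following are equivalent: (1) tr(φ₁(A₁) φ₂(A₂) ⋯ φ_m(A_m)) = tr(A₁ A₂ ⋯ A_m) for all A₁, …, A_m ∈ DS_n; (2) φ₁(A₁) ⋯ φ_m(A_m) and A₁ ⋯ A_m have the same characteristic polynomial for all A₁, …, A_m ∈ DS_n; (3) there exist permutation matrices P₁, P₂, …, P_m, P_{m+1} = P₁ in P_n such that φ_i(A) = P_i A P_{i+1}ᵀ for all A ∈ DS_n and all i ∈ {1, …, m}. -/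
/-!
The implications from conjugation to equal characteristic polynomials (telescoping) and from there
to equal traces are formal; the content lies in deducing the form of the maps from the traces.

* If permutation matrices have product `1`, then so do their images, because a doubly stochastic
  matrix of trace `n` is the identity. A doubly stochastic matrix with a doubly stochastic inverse
  is a permutation matrix (`exists_perm_of_mul_eq_one`), so every `φ i` sends permutation matrices
  to permutation matrices.
* Dividing out the images of `1` turns these into maps of the symmetric group fixing `1` that
  preserve the relation "the ordered product is `1`". Having at least three factors forces all of
  them to be one and the same homomorphism (`exists_hom_of_prodTo_eq_one`).
* This homomorphism preserves the trace, that is, the number of fixed points. It therefore sends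
  transpositions to transpositions, and is conjugation by some permutation
  (`exists_conj_of_card_support`). This yields the permutations `p i`.
* After undoing the `p i`, an arbitrary doubly stochastic `A` and its image `X` satisfy
  `tr (X * P) = tr (A * P)` for all permutation matrices `P`; Birkhoff's theorem extends this to
  all doubly stochastic `P`, in particular to `Xᵀ` and `Aᵀ`, so that `X - A` has Frobenius norm `0`
  (`eq_of_trace_mul_permMatrixHom`).

The permutation matrix of `σ` is taken to be `permMatrixHom σ = (σ⁻¹).permMatrix ℝ`, which is
multiplicative in `σ`, whereas `permMatrix` itself reverses products.
-/


open Matrix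

/-! ### Ordered products of sequences in a monoid -/

/-- The ordered product `f 0 * f 1 * ⋯ * f (k - 1)`. -/
def prodTo {M : Type*} [Monoid M] (f : ℕ → M) : ℕ → M
  | 0 => 1
  | k + 1 => prodTo f k * f k

section prodTo

variable {M : Type*} [Monoid M]

lemma prod_ofFn_eq_prodTo (f : ℕ → M) (m : ℕ) :
    (List.ofFn fun i : Fin m => f i).prod = prodTo f m := by
  induction m with
  | zero => simp [prodTo]
  | succ m ih =>
    rw [List.ofFn_succ', List.concat_eq_append, List.prod_append, prodTo, ← ih]
    simp

lemma prodTo_congr {f g : ℕ → M} {m : ℕ} (h : ∀ i < m, f i = g i) :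
    prodTo f m = prodTo g m := by
  induction m with
  | zero => rfl
  | succ m ih => rw [prodTo, prodTo, ih fun i hi => h i (by omega), h m (by omega)]

lemma map_prodTo {N : Type*} [Monoid N] (g : M →* N) (f : ℕ → M) (m : ℕ) :
    g (prodTo f m) = prodTo (fun i => g (f i)) m := by
  induction m with
  | zero => exact map_one g
  | succ m ih => rw [prodTo, prodTo, map_mul, ih]

lemma prodTo_mem (S : Submonoid M) {f : ℕ → M} {m : ℕ} (h : ∀ i < m, f i ∈ S) :
    prodTo f m ∈ S := by
  induction m with
  | zero => exact S.one_mem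
  | succ m ih => exact S.mul_mem (ih fun i hi => h i (by omega)) (h m (by omega))

lemma prodTo_of_le {f : ℕ → M} {a b : ℕ} (hab : a ≤ b)
    (h : ∀ l, a ≤ l → l < b → f l = 1) : prodTo f b = prodTo f a := by
  induction b, hab using Nat.le_induction with
  | base => rfl
  | succ b hb ih =>
    rw [prodTo, ih fun l h1 h2 => h l h1 (by omega), h b hb (by omega), mul_one]

lemma prodTo_triple {f : ℕ → M} {i j k m : ℕ} (hij : i < j) (hjk : j < k) (hkm : k < m)
    (h : ∀ l, l ≠ i → l ≠ j → l ≠ k → f l = 1) : prodTo f m = f i * f j * f k := by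
  have h0 : prodTo f i = prodTo f 0 :=
    prodTo_of_le (by omega) fun l _ _ => h l (by omega) (by omega) (by omega)
  rw [prodTo_of_le (a := k + 1) (by omega) fun l _ _ => h l (by omega) (by omega) (by omega),
    prodTo,
    prodTo_of_le (a := j + 1) (by omega) fun l _ _ => h l (by omega) (by omega) (by omega),
    prodTo,
    prodTo_of_le (a := i + 1) (by omega) fun l _ _ => h l (by omega) (by omega) (by omega),
    prodTo, h0, prodTo, one_mul]

lemma prodTo_pair {f : ℕ → M} {i j m : ℕ} (hij : i < j) (hjm : j < m)
    (h : ∀ l, l ≠ i → l ≠ j → f l = 1) : prodTo f m = f i * f j := by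
  have h0 : prodTo f i = prodTo f 0 :=
    prodTo_of_le (by omega) fun l _ _ => h l (by omega) (by omega)
  rw [prodTo_of_le (a := j + 1) (by omega) fun l _ _ => h l (by omega) (by omega), prodTo,
    prodTo_of_le (a := i + 1) (by omega) fun l _ _ => h l (by omega) (by omega), prodTo,
    h0, prodTo, one_mul]

lemma prodTo_pair_or {f : ℕ → M} {i j m : ℕ} (hij : i ≠ j) (him : i < m) (hjm : j < m)
    (h : ∀ l, l ≠ i → l ≠ j → f l = 1) :
    prodTo f m = f i * f j ∨ prodTo f m = f j * f i := by
  rcases lt_or_gt_of_ne hij with h1 | h1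
  · exact Or.inl (prodTo_pair h1 hjm h)
  · exact Or.inr (prodTo_pair h1 him fun l hl hl' => h l hl' hl)

/-- Telescoping of the factors `b i * f i * a (i + 1)`. -/
lemma prodTo_telescope {a b : ℕ → M} (f : ℕ → M) (h0 : b 0 * a 0 = 1) {m : ℕ}
    (h : ∀ i < m, a i * b i = 1) :
    prodTo (fun i => b i * f i * a (i + 1)) m = b 0 * prodTo f m * a m := by
  induction m with
  | zero => simp [prodTo, h0]
  | succ m ih =>
    rw [prodTo, prodTo, ih fun i hi => h i (by omega)]
    calc b 0 * prodTo f m * a m * (b m * f m * a (m + 1))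
        = b 0 * prodTo f m * (a m * b m) * f m * a (m + 1) := by simp only [mul_assoc]
      _ = _ := by rw [h m (by omega), mul_one]; simp only [mul_assoc]

lemma exists_prodTo_eq_mul (S : Submonoid M) {f : ℕ → M} {i m : ℕ} (him : i < m)
    (h : ∀ l < m, f l ∈ S) : ∃ N ∈ S, prodTo f m = prodTo f i * f i * N := by
  induction m, him using Nat.le_induction with
  | base => exact ⟨1, S.one_mem, by rw [mul_one]; rfl⟩
  | succ m hm ih =>
    obtain ⟨N, hN, e⟩ := ih fun l hl => h l (by omega)
    exact ⟨N * f m, S.mul_mem hN (h m (by omega)), by rw [prodTo, e, mul_assoc]⟩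

end prodTo

/-! ### Endomorphisms of the symmetric group that preserve the number of fixed points -/

section Symmetric

open Equiv Equiv.Perm

variable {α : Type*} [Fintype α] [DecidableEq α]

lemma eq_or_eq_of_card_support_swap_mul_swap {a b c d : α} (hab : a ≠ b) (hcd : c ≠ d)
    (h : (swap a b * swap c d).support.card = 3) : a = c ∨ a = d ∨ b = c ∨ b = d := by
  by_contra! hne
  obtain ⟨h1, h2, h3, h4⟩ := hne
  have hd : Perm.Disjoint (swap a b) (swap c d) := by
    rw [Perm.disjoint_iff_disjoint_support, support_swap hab, support_swap hcd]
    simp [h1.symm, h2.symm, h3.symm, h4.symm]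
  rw [hd.card_support_mul, card_support_swap hab, card_support_swap hcd] at h
  omega

/-- The product of two distinct transpositions moving `z` is a three-cycle, so their images are
transpositions sharing a point; the relation `(z i) (z j) (z i) = (i j)` prevents three images from forming a triangle,
so all of them share one common point `c`. -/
lemma exists_common_point (θ : Perm α →* Perm α)
    (hθ : ∀ σ, (θ σ).support.card = σ.support.card) (z : α) :
    ∃ c, ∀ i, i ≠ z → ∃ d, c ≠ d ∧ θ (swap z i) = swap c d := by
  have inj : Function.Injective θ := by
    rw [injective_iff_map_eq_one]
    intro σ h
    rw [← card_support_eq_zero, ← hθ, h, support_one, Finset.card_empty]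
  have hsw : ∀ i, i ≠ z → ∃ a b, a ≠ b ∧ θ (swap z i) = swap a b := fun i hi => by
    have : IsSwap (θ (swap z i)) := by
      rw [← card_support_eq_two, hθ, card_support_swap hi.symm]
    exact this
  have h3 : ∀ i j, i ≠ z → j ≠ z → i ≠ j →
      (θ (swap z i) * θ (swap z j)).support.card = 3 := fun i j hi hj hij => by
    rw [← map_mul, hθ]
    exact (isThreeCycle_swap_mul_swap_same hi.symm hj.symm hij).card_support
  by_cases hex : ∃ i j, i ≠ z ∧ j ≠ z ∧ i ≠ j
  · obtain ⟨i, j, hi, hj, hij⟩ := hex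
    have hshare : ∃ c a b, c ≠ a ∧ c ≠ b ∧ θ (swap z i) = swap c a ∧ θ (swap z j) = swap c b := by
      obtain ⟨a, b, hab, e1⟩ := hsw i hi
      obtain ⟨c, d, hcd, e2⟩ := hsw j hj
      have := h3 i j hi hj hij
      rw [e1, e2] at this
      rcases eq_or_eq_of_card_support_swap_mul_swap hab hcd this with rfl | rfl | rfl | rfl
      · exact ⟨a, b, d, hab, hcd, e1, e2⟩
      · exact ⟨a, b, c, hab, hcd.symm, e1, by rw [e2, Equiv.swap_comm]⟩
      · exact ⟨b, a, d, hab.symm, hcd, by rw [e1, Equiv.swap_comm], e2⟩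
      · exact ⟨b, a, c, hab.symm, hcd.symm, by rw [e1, Equiv.swap_comm], by rw [e2, Equiv.swap_comm]⟩
    obtain ⟨c, a, b, hca, hcb, e1, e2⟩ := hshare
    have hab : a ≠ b := by
      rintro rfl
      exact hij (swap_injective_of_left z (inj (e1.trans e2.symm)))
    refine ⟨c, fun k hk => ?_⟩
    by_cases hki : k = i
    · subst hki; exact ⟨a, hca, e1⟩
    by_cases hkj : k = j
    · subst hkj; exact ⟨b, hcb, e2⟩
    obtain ⟨p, q, hpq, e⟩ := hsw k hk
    have s1 := h3 k i hk hi hki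
    have s2 := h3 k j hk hj hkj
    rw [e, e1] at s1
    rw [e, e2] at s2
    have t1 := eq_or_eq_of_card_support_swap_mul_swap hpq hca s1
    have t2 := eq_or_eq_of_card_support_swap_mul_swap hpq hcb s2
    by_cases hp : p = c
    · subst hp; exact ⟨q, hpq, e⟩
    by_cases hq : q = c
    · subst hq; exact ⟨p, hpq.symm, by rw [e, Equiv.swap_comm]⟩
    exfalso
    have e' : θ (swap z k) = swap a b := by
      have : (p = a ∧ q = b) ∨ (p = b ∧ q = a) := by grind
      rcases this with ⟨rfl, rfl⟩ | ⟨rfl, rfl⟩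
      · exact e
      · rw [e, Equiv.swap_comm]
    have hA : swap z i * swap j z * swap z i = swap i j :=
      swap_mul_swap_mul_swap hj hij.symm
    have hB : swap c a * swap b c * swap c a = swap a b :=
      swap_mul_swap_mul_swap hcb.symm hab.symm
    have : θ (swap i j) = θ (swap z k) := by
      rw [← hA, map_mul, map_mul, Equiv.swap_comm j z, e1, e2, e', Equiv.swap_comm c b, hB]
    have := congrArg (fun σ : Perm α => σ z) (inj this)
    simp [swap_apply_of_ne_of_ne hi.symm hj.symm] at this
    exact hk this.symm
  · by_cases h1 : ∃ i, i ≠ z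
    · obtain ⟨i, hi⟩ := h1
      obtain ⟨a, b, hab, e⟩ := hsw i hi
      refine ⟨a, fun k hk => ⟨b, hab, ?_⟩⟩
      have : k = i := by
        by_contra hki
        exact hex ⟨k, i, hk, hi, hki⟩
      rw [this, e]
    · exact ⟨z, fun i hi => absurd ⟨i, hi⟩ h1⟩

/-- An endomorphism of the symmetric group preserving the number of moved points is inner. -/
lemma exists_conj_of_card_support (θ : Perm α →* Perm α)
    (hθ : ∀ σ, (θ σ).support.card = σ.support.card) (z : α) :
    ∃ π : Perm α, ∀ σ, θ σ = π * σ * π⁻¹ := by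
  obtain ⟨c, hc⟩ := exists_common_point θ hθ z
  have inj : Function.Injective θ := by
    rw [injective_iff_map_eq_one]
    intro σ h
    rw [← card_support_eq_zero, ← hθ, h, support_one, Finset.card_empty]
  have hc' : ∀ i, ∃ d, (i = z ↔ d = c) ∧ θ (swap z i) = swap c d := fun i => by
    by_cases hi : i = z
    · exact ⟨c, by simp [hi], by rw [hi, swap_self, swap_self]; exact map_one θ⟩
    · obtain ⟨d, hd, e⟩ := hc i hi
      exact ⟨d, by simp [hi, hd.symm], e⟩
  choose f hf1 hf2 using hc'
  have finj : Function.Injective f := fun i j hij => by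
    have : θ (swap z i) = θ (swap z j) := by rw [hf2, hf2, hij]
    exact swap_injective_of_left z (inj this)
  let π : Perm α := Equiv.ofBijective f (Finite.injective_iff_bijective.mp finj)
  have hz : π z = c := (hf1 z).mp rfl
  have hswz : ∀ i, θ (swap z i) = π * swap z i * π⁻¹ := fun i => by
    rw [← swap_apply_apply, hz, hf2]; rfl
  have hsw : ∀ i j, i ≠ j → θ (swap i j) = π * swap i j * π⁻¹ := fun i j hij => by
    by_cases hi : i = z
    · rw [hi, hswz]
    by_cases hj : j = z
    · rw [hj, Equiv.swap_comm, hswz]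
    rw [Equiv.swap_comm, ← swap_mul_swap_mul_swap (x := i) (y := z) hi hij, Equiv.swap_comm i z,
      map_mul, map_mul, hswz, hswz]
    group
  refine ⟨π, fun σ => ?_⟩
  induction σ using swap_induction_on with
  | one => simp
  | swap_mul g x y hxy ih => rw [map_mul, hsw x y hxy, ih]; group

end Symmetric

/-! ### Doubly stochastic matrices -/

section Stochastic

variable {n : ℕ}

lemma isDS_iff_mem {A : Matrix (Fin n) (Fin n) ℝ} :
    IsDS A ↔ A ∈ doublyStochastic ℝ (Fin n) :=
  mem_doublyStochastic_iff_sum.symm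

lemma permMatrixHom_mem (σ : Equiv.Perm (Fin n)) :
    permMatrixHom (R := ℝ) σ ∈ doublyStochastic ℝ (Fin n) :=
  permMatrix_mem_doublyStochastic

lemma permMatrixHom_transpose (σ : Equiv.Perm (Fin n)) :
    (permMatrixHom (R := ℝ) σ)ᵀ = permMatrixHom σ⁻¹ := by
  simp

lemma permMatrixHom_apply_apply (σ : Equiv.Perm (Fin n)) (i j : Fin n) :
    permMatrixHom (R := ℝ) σ i j = if i = σ j then 1 else 0 := by
  simp [PEquiv.toMatrix_apply, Equiv.symm_apply_eq]

lemma card_support_add_trace (σ : Equiv.Perm (Fin n)) :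
    (σ.support.card : ℝ) + (permMatrixHom (R := ℝ) σ).trace = n := by
  have h : (permMatrixHom (R := ℝ) σ).trace =
      ((Finset.univ.filter fun i => ¬ σ i ≠ i).card : ℝ) := by
    rw [Finset.card_filter, Nat.cast_sum, Matrix.trace]
    refine Finset.sum_congr rfl fun i _ => ?_
    simp [permMatrixHom_apply_apply, eq_comm, -permMatrixHom_apply]
  have h2 := Finset.card_filter_add_card_filter_not (s := (Finset.univ : Finset (Fin n)))
    (fun i => σ i ≠ i)
  rw [h, Equiv.Perm.support]
  rw [Finset.card_univ, Fintype.card_fin] at h2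
  exact_mod_cast h2

lemma eq_one_of_trace_eq {A : Matrix (Fin n) (Fin n) ℝ} (hA : A ∈ doublyStochastic ℝ (Fin n))
    (h : A.trace = n) : A = 1 := by
  have hle : ∀ i ∈ Finset.univ, A i i ≤ 1 := fun i _ => le_one_of_mem_doublyStochastic hA
  have hd : ∀ i, A i i = 1 := by
    have := (Finset.sum_eq_sum_iff_of_le hle).mp (by simpa [Matrix.trace] using h)
    exact fun i => this i (Finset.mem_univ i)
  ext i j
  by_cases hij : i = j
  · subst hij; simp [hd]
  · have hs := sum_row_of_mem_doublyStochastic hA i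
    have hp := Finset.sum_le_univ_sum_of_nonneg (s := {i, j})
      (fun k => nonneg_of_mem_doublyStochastic hA (i := i) (j := k))
    rw [Finset.sum_pair hij, hs, hd] at hp
    have := nonneg_of_mem_doublyStochastic hA (i := i) (j := j)
    rw [Matrix.one_apply_ne hij]
    linarith

/-- The `(i, i)` entry of `X * Y = 1` is a convex combination of entries of `Y`, all at most `1`,
so `Y k i = 1` whenever `X i k ≠ 0`; since column `i` of `Y` sums to `1`, row `i` of `X` is
supported at a single place. -/
lemma exists_perm_of_mul_eq_one {X Y : Matrix (Fin n) (Fin n) ℝ}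
    (hX : X ∈ doublyStochastic ℝ (Fin n)) (hY : Y ∈ doublyStochastic ℝ (Fin n))
    (h : X * Y = 1) : ∃ σ : Equiv.Perm (Fin n), X = permMatrixHom σ := by
  have hY1 : ∀ i k, X i k ≠ 0 → Y k i = 1 := fun i k hik => by
    have h1 : ∑ k, X i k * Y k i = ∑ k, X i k := by
      rw [sum_row_of_mem_doublyStochastic hX, ← Matrix.mul_apply, h, Matrix.one_apply_eq]
    have hle : ∀ k ∈ Finset.univ, X i k * Y k i ≤ X i k := fun k _ =>
      mul_le_of_le_one_right (nonneg_of_mem_doublyStochastic hX)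
        (le_one_of_mem_doublyStochastic hY)
    have := (Finset.sum_eq_sum_iff_of_le hle).mp h1 k (Finset.mem_univ k)
    exact mul_left_cancel₀ hik (by rw [this, mul_one])
  have hex : ∀ i, ∃ k, X i k ≠ 0 := fun i => by
    by_contra! h0
    have := sum_row_of_mem_doublyStochastic hX i
    simp [h0] at this
  choose f hf using hex
  have huniq : ∀ i k, X i k ≠ 0 → k = f i := fun i k hk => by
    by_contra hne
    have hp := Finset.sum_le_univ_sum_of_nonneg (s := {k, f i})
      (fun l => nonneg_of_mem_doublyStochastic hY (i := l) (j := i))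
    rw [Finset.sum_pair hne, sum_col_of_mem_doublyStochastic hY, hY1 i k hk,
      hY1 i _ (hf i)] at hp
    norm_num at hp
  have hone : ∀ i, X i (f i) = 1 := fun i => by
    rw [← sum_row_of_mem_doublyStochastic hX i]
    refine (Finset.sum_eq_single _ (fun k _ hk => ?_) (by simp)).symm
    by_contra h0
    exact hk (huniq i k h0)
  have finj : Function.Injective f := fun i j hij => by
    by_contra hne
    have hp := Finset.sum_le_univ_sum_of_nonneg (s := {i, j})
      (fun l => nonneg_of_mem_doublyStochastic hX (i := l) (j := f i))
    rw [Finset.sum_pair hne, sum_col_of_mem_doublyStochastic hX, hone i, hij, hone j] at hp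
    norm_num at hp
  let π : Equiv.Perm (Fin n) := Equiv.ofBijective f (Finite.injective_iff_bijective.mp finj)
  refine ⟨π⁻¹, ?_⟩
  ext i k
  have hπ : i = π⁻¹ k ↔ f i = k := by
    rw [Equiv.Perm.eq_inv_iff_eq]; rfl
  rw [permMatrixHom_apply_apply]
  by_cases hk : f i = k
  · rw [if_pos (hπ.mpr hk), ← hk, hone]
  · rw [if_neg (fun h => hk (hπ.mp h))]
    by_contra h0
    exact hk (huniq i k h0).symm

lemma prodTo_permMatrix_of_eq_one {f : ℕ → Matrix (Fin n) (Fin n) ℝ} {i m : ℕ} (him : i < m)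
    (hf : ∀ l < m, f l ∈ doublyStochastic ℝ (Fin n)) (h : prodTo f m = 1) :
    ∃ σ : Equiv.Perm (Fin n), f i = permMatrixHom σ := by
  obtain ⟨N, hN, e⟩ := exists_prodTo_eq_mul _ him hf
  have hL := prodTo_mem (f := f) (m := i) (doublyStochastic ℝ (Fin n)) fun l hl => hf l (by omega)
  refine exists_perm_of_mul_eq_one (hf i him) ((doublyStochastic ℝ (Fin n)).mul_mem hN hL) ?_
  rw [e, mul_assoc] at h
  rw [← mul_assoc]
  exact mul_eq_one_comm.mp h

/-- By Birkhoff's theorem the trace pairings with permutation matrices determine the pairings of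
`X - A` with `Xᵀ` and `Aᵀ`, hence the Frobenius norm of `X - A`. -/
lemma eq_of_trace_mul_permMatrixHom {X A : Matrix (Fin n) (Fin n) ℝ}
    (hX : X ∈ doublyStochastic ℝ (Fin n)) (hA : A ∈ doublyStochastic ℝ (Fin n))
    (h : ∀ σ, (X * permMatrixHom σ).trace = (A * permMatrixHom σ).trace) : X = A := by
  have hD : ∀ Y ∈ doublyStochastic ℝ (Fin n), ((X - A) * Y).trace = 0 := fun Y hY => by
    obtain ⟨w, -, -, rfl⟩ := exists_eq_sum_perm_of_mem_doublyStochastic hY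
    rw [Finset.mul_sum, Matrix.trace_sum]
    refine Finset.sum_eq_zero fun σ _ => ?_
    have := h σ⁻¹
    rw [permMatrixHom_apply, inv_inv] at this
    rw [Matrix.mul_smul, Matrix.trace_smul, Matrix.sub_mul, Matrix.trace_sub, this, sub_self,
      smul_zero]
  have h0 : ((X - A) * (X - A)ᴴ).trace = 0 := by
    rw [Matrix.conjTranspose_eq_transpose_of_trivial, Matrix.transpose_sub, Matrix.mul_sub,
      Matrix.trace_sub, hD _ (transpose_mem_doublyStochastic_iff.mpr hX),
      hD _ (transpose_mem_doublyStochastic_iff.mpr hA), sub_zero]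
  exact sub_eq_zero.mp (Matrix.trace_mul_conjTranspose_self_eq_zero_iff.mp h0)

end Stochastic

/-! ### Multiplicative sequences of maps on groups -/

section Multiplicative

open Equiv Equiv.Perm

/-- The relations for pairs give `θ i σ = (θ j σ⁻¹)⁻¹` for `i ≠ j`. With at least three
indices this makes all `θ i` equal, and the relations for triples then give multiplicativity. -/
lemma exists_hom_of_prodTo_eq_one {G : Type*} [Group G] {m : ℕ} (hm : 3 ≤ m) (θ : ℕ → G → G)
    (h1 : ∀ i, θ i 1 = 1)
    (H : ∀ s : ℕ → G, prodTo s m = 1 → prodTo (fun i => θ i (s i)) m = 1) :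
    ∃ T : G →* G, ∀ i < m, ∀ σ, θ i σ = T σ := by
  have h2 : ∀ i j, i < j → j < m → ∀ σ, θ i σ * θ j σ⁻¹ = 1 := fun i j hij hj σ => by
    let s : ℕ → G := fun l => if l = i then σ else if l = j then σ⁻¹ else 1
    have hs : ∀ l, l ≠ i → l ≠ j → s l = 1 := fun l hl hl' => by simp [s, hl, hl']
    have si : s i = σ := by simp [s]
    have sj : s j = σ⁻¹ := by simp [s, hij.ne']
    have := H s (by rw [prodTo_pair hij hj hs, si, sj, mul_inv_cancel])
    rwa [prodTo_pair hij hj (fun l hl hl' => by rw [hs l hl hl', h1]), si, sj] at this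
  have h3 : ∀ i j k, i < j → j < k → k < m → ∀ σ τ, θ i σ * θ j τ * θ k (σ * τ)⁻¹ = 1 :=
    fun i j k hij hjk hk σ τ => by
    let s : ℕ → G := fun l =>
      if l = i then σ else if l = j then τ else if l = k then (σ * τ)⁻¹ else 1
    have hs : ∀ l, l ≠ i → l ≠ j → l ≠ k → s l = 1 := fun l hl hl' hl'' => by
      simp [s, hl, hl', hl'']
    have si : s i = σ := by simp [s]
    have sj : s j = τ := by simp [s, hij.ne']
    have sk : s k = (σ * τ)⁻¹ := by simp [s, hjk.ne', (hij.trans hjk).ne']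
    have := H s (by rw [prodTo_triple hij hjk hk hs, si, sj, sk, mul_inv_cancel])
    rwa [prodTo_triple hij hjk hk (fun l hl hl' hl'' => by rw [hs l hl hl' hl'', h1]),
      si, sj, sk] at this
  have h4 : ∀ i j, i ≠ j → i < m → j < m → ∀ σ, θ i σ = (θ j σ⁻¹)⁻¹ := fun i j hij hi hj σ => by
    rcases lt_or_gt_of_ne hij with h | h
    · exact eq_inv_of_mul_eq_one_left (h2 i j h hj σ)
    · have := h2 j i h hi σ⁻¹
      rw [inv_inv] at this
      exact eq_inv_of_mul_eq_one_right this
  have h5 : ∀ i < m, ∀ σ, θ i σ = θ 0 σ := fun i hi σ => by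
    by_cases hi0 : i = 0
    · rw [hi0]
    obtain ⟨k, hki, hk0, hkm⟩ : ∃ k, i ≠ k ∧ 0 ≠ k ∧ k < m := by
      by_cases h : i = 1
      · exact ⟨2, by omega, by omega, by omega⟩
      · exact ⟨1, by omega, by omega, by omega⟩
    rw [h4 i k hki hi hkm, h4 0 k hk0 (by omega) hkm]
  refine ⟨MonoidHom.mk' (θ 0) fun σ τ => ?_, h5⟩
  have := h3 0 1 2 (by omega) (by omega) (by omega) σ τ
  rw [h5 1 (by omega), mul_eq_one_iff_eq_inv] at this
  rw [this, ← h4 0 2 (by omega) (by omega) (by omega)]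

lemma exists_perm_of_card_support {α : Type*} [Fintype α] [DecidableEq α] (z : α) {m : ℕ}
    (hm : 3 ≤ m) (Φ : ℕ → Perm α → Perm α)
    (H : ∀ s : ℕ → Perm α,
      (prodTo (fun i => Φ i (s i)) m).support.card = (prodTo s m).support.card) :
    ∃ p : ℕ → Perm α, p m = p 0 ∧ ∀ i < m, ∀ σ, Φ i σ = p i * σ * (p (i + 1))⁻¹ := by
  have hone : ∀ s : ℕ → Perm α, prodTo s m = 1 → prodTo (fun i => Φ i (s i)) m = 1 :=
    fun s hs => by rw [← card_support_eq_zero, H, hs, support_one, Finset.card_empty]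
  -- The partial products of the `Φ i 1` normalise `Φ` to maps `θ i` fixing `1`.
  let a : ℕ → Perm α := prodTo fun i => Φ i 1
  have ha0 : a 0 = 1 := rfl
  have ham : a m = 1 := hone (fun _ => 1) (prodTo_of_le (a := 0) (by omega) fun _ _ _ => rfl)
  let θ : ℕ → Perm α → Perm α := fun i σ => a i * Φ i σ * (a (i + 1))⁻¹
  have hθ1 : ∀ i, θ i 1 = 1 := fun i => by
    change a i * Φ i 1 * (a i * Φ i 1)⁻¹ = 1
    exact mul_inv_cancel _
  have hθ : ∀ s : ℕ → Perm α,
      prodTo (fun i => θ i (s i)) m = prodTo (fun i => Φ i (s i)) m := fun s => by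
    have := prodTo_telescope (a := fun i => (a i)⁻¹) (b := a) (fun i => Φ i (s i))
      (mul_inv_cancel _) (m := m) (fun i _ => inv_mul_cancel _)
    simpa [ha0, ham] using this
  obtain ⟨T, hT⟩ := exists_hom_of_prodTo_eq_one hm θ hθ1 fun s hs => by rw [hθ, hone s hs]
  have hTc : ∀ σ, (T σ).support.card = σ.support.card := fun σ => by
    let s : ℕ → Perm α := fun l => if l = 0 then σ else 1
    have hs : ∀ l, l ≠ 0 → l ≠ 1 → s l = 1 := fun l hl _ => by simp [s, hl]
    have := H s
    rw [← hθ, prodTo_pair (i := 0) (j := 1) (by omega) (by omega) hs,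
      prodTo_pair (i := 0) (j := 1) (by omega) (by omega)
        (fun l hl hl' => by rw [hs l hl hl', hθ1])] at this
    simpa [s, hθ1, hT 0 (by omega)] using this
  obtain ⟨π, hπ⟩ := exists_conj_of_card_support T hTc z
  refine ⟨fun i => (a i)⁻¹ * π, by simp [ha0, ham], fun i hi σ => ?_⟩
  have h : a i * Φ i σ * (a (i + 1))⁻¹ = π * σ * π⁻¹ := (hT i hi σ).trans (hπ σ)
  have h' : Φ i σ = (a i)⁻¹ * (a i * Φ i σ * (a (i + 1))⁻¹) * a (i + 1) := by group
  rw [h', h]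
  group

end Multiplicative

/-! ### Trace-preserving sequences of maps on doubly stochastic matrices -/

section Main

variable {n m : ℕ}

lemma exists_perm_map_permMatrixHom (hm : 3 ≤ m)
    (ψ : ℕ → Matrix (Fin n) (Fin n) ℝ → Matrix (Fin n) (Fin n) ℝ)
    (hψ : ∀ i, ∀ A ∈ doublyStochastic ℝ (Fin n), ψ i A ∈ doublyStochastic ℝ (Fin n))
    (H : ∀ A : ℕ → Matrix (Fin n) (Fin n) ℝ, (∀ i, A i ∈ doublyStochastic ℝ (Fin n)) →
      (prodTo (fun i => ψ i (A i)) m).trace = (prodTo A m).trace)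
    {i : ℕ} (hi : i < m) (σ : Equiv.Perm (Fin n)) :
    ∃ τ : Equiv.Perm (Fin n), ψ i (permMatrixHom σ) = permMatrixHom τ := by
  obtain ⟨j, hij, hj⟩ : ∃ j, i ≠ j ∧ j < m := by
    by_cases h : i = 0
    · exact ⟨1, by omega, by omega⟩
    · exact ⟨0, by omega, by omega⟩
  let s : ℕ → Equiv.Perm (Fin n) := fun l => if l = i then σ else if l = j then σ⁻¹ else 1
  have si : s i = σ := by simp [s]
  have sj : s j = σ⁻¹ := by simp [s, hij.symm]
  have hs : prodTo s m = 1 := by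
    rcases prodTo_pair_or hij hi hj (f := s) (fun l hl hl' => by simp [s, hl, hl']) with h | h <;>
      simp [h, si, sj]
  have hmem : ∀ l, ψ l (permMatrixHom (s l)) ∈ doublyStochastic ℝ (Fin n) :=
    fun l => hψ l _ (permMatrixHom_mem _)
  have h := prodTo_permMatrix_of_eq_one (f := fun l => ψ l (permMatrixHom (s l))) hi
    (fun l _ => hmem l) <| eq_one_of_trace_eq (prodTo_mem _ fun l _ => hmem l) <| by
      rw [H (fun l => permMatrixHom (s l)) fun l => permMatrixHom_mem _, ← map_prodTo, hs, map_one,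
        Matrix.trace_one, Fintype.card_fin]
  simpa only [si] using h

/-- `ψ i` is given on permutation matrices by a pair of permutations `p i`, `p (i + 1)`; after
undoing these, pairing with permutation matrices in a second slot shows that `ψ i` has the same
form on every doubly stochastic matrix. -/
lemma exists_perm_of_trace_eq (hn : 0 < n) (hm : 3 ≤ m)
    (ψ : ℕ → Matrix (Fin n) (Fin n) ℝ → Matrix (Fin n) (Fin n) ℝ)
    (hψ : ∀ i, ∀ A ∈ doublyStochastic ℝ (Fin n), ψ i A ∈ doublyStochastic ℝ (Fin n))
    (hid : ∀ i, m ≤ i → ∀ A, ψ i A = A)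
    (H : ∀ A : ℕ → Matrix (Fin n) (Fin n) ℝ, (∀ i, A i ∈ doublyStochastic ℝ (Fin n)) →
      (prodTo (fun i => ψ i (A i)) m).trace = (prodTo A m).trace) :
    ∃ p : ℕ → Equiv.Perm (Fin n), p m = p 0 ∧ ∀ i < m, ∀ A ∈ doublyStochastic ℝ (Fin n),
      ψ i A = permMatrixHom (p i) * A * permMatrixHom (p (i + 1))⁻¹ := by
  have hex : ∀ i (σ : Equiv.Perm (Fin n)), ∃ τ : Equiv.Perm (Fin n),
      ψ i (permMatrixHom σ) = permMatrixHom τ := fun i σ => by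
    by_cases hi : i < m
    · exact exists_perm_map_permMatrixHom hm ψ hψ H hi σ
    · exact ⟨σ, hid i (by omega) _⟩
  choose Φ hΦ using hex
  obtain ⟨p, hp0, hp⟩ := exists_perm_of_card_support ⟨0, hn⟩ hm Φ fun s => by
    have h := H (fun l => permMatrixHom (s l)) fun l => permMatrixHom_mem _
    simp only [hΦ] at h
    rw [← map_prodTo, ← map_prodTo] at h
    have h1 := card_support_add_trace (prodTo (fun i => Φ i (s i)) m)
    have h2 := card_support_add_trace (prodTo s m)
    rw [h] at h1
    exact_mod_cast add_right_cancel (h1.trans h2.symm)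
  refine ⟨p, hp0, fun i hi A hA => ?_⟩
  have hinv : ∀ q : Equiv.Perm (Fin n),
      permMatrixHom (R := ℝ) q * permMatrixHom q⁻¹ = 1 := fun q => by
    rw [← map_mul, mul_inv_cancel, map_one]
  have hinv' : ∀ q : Equiv.Perm (Fin n),
      permMatrixHom (R := ℝ) q⁻¹ * permMatrixHom q = 1 := fun q => by
    rw [← map_mul, inv_mul_cancel, map_one]
  -- `χ l` is `ψ l` with the permutations `p l`, `p (l + 1)` undone.
  let χ : ℕ → Matrix (Fin n) (Fin n) ℝ → Matrix (Fin n) (Fin n) ℝ := fun l B =>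
    permMatrixHom (p l)⁻¹ * ψ l B * permMatrixHom (p (l + 1))
  have hχperm : ∀ l < m, ∀ τ, χ l (permMatrixHom τ) = permMatrixHom τ := fun l hl τ => by
    simp only [χ, hΦ, hp l hl, ← map_mul]
    congr 1
    group
  have hχ : ∀ B : ℕ → Matrix (Fin n) (Fin n) ℝ, (∀ l, B l ∈ doublyStochastic ℝ (Fin n)) →
      (prodTo (fun l => χ l (B l)) m).trace = (prodTo B m).trace := fun B hB => by
    have := prodTo_telescope (a := fun l => permMatrixHom (R := ℝ) (p l))
      (b := fun l => permMatrixHom (R := ℝ) (p l)⁻¹) (fun l => ψ l (B l)) (hinv' _) (m := m)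
      (fun l _ => hinv _)
    rw [← H B hB]
    change (prodTo (fun l => permMatrixHom (R := ℝ) (p l)⁻¹ * ψ l (B l) *
      permMatrixHom (p (l + 1))) m).trace = _
    rw [this, hp0, Matrix.trace_mul_comm, ← mul_assoc, hinv, one_mul]
  have hAχ : χ i A = A := by
    refine eq_of_trace_mul_permMatrixHom ?_ hA fun τ => ?_
    · exact Submonoid.mul_mem _ (Submonoid.mul_mem _ (permMatrixHom_mem _) (hψ i A hA))
        (permMatrixHom_mem _)
    obtain ⟨j, hij, hj⟩ : ∃ j, i ≠ j ∧ j < m := by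
      by_cases h : i = 0
      · exact ⟨1, by omega, by omega⟩
      · exact ⟨0, by omega, by omega⟩
    let B : ℕ → Matrix (Fin n) (Fin n) ℝ := fun l =>
      if l = i then A else if l = j then permMatrixHom τ else permMatrixHom 1
    have Bi : B i = A := by simp only [B, if_true]
    have Bj : B j = permMatrixHom τ := by simp only [B, hij.symm, if_true, if_false]
    have Bl : ∀ l, l ≠ i → l ≠ j → B l = permMatrixHom 1 := fun l hl hl' => by
      simp only [B, hl, hl', if_false]
    have hB : ∀ l, B l ∈ doublyStochastic ℝ (Fin n) := fun l => by
      by_cases hl : l = i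
      · rw [hl, Bi]; exact hA
      by_cases hl' : l = j
      · rw [hl', Bj]; exact permMatrixHom_mem _
      rw [Bl l hl hl']; exact permMatrixHom_mem _
    -- Outside the first `m` places `χ l` is replaced by the identity, which changes no product.
    have hc : prodTo (fun l => χ l (B l)) m =
        prodTo (fun l => if l < m then χ l (B l) else B l) m :=
      prodTo_congr fun l hl => (if_pos hl).symm
    have key : ∀ f : ℕ → Matrix (Fin n) (Fin n) ℝ, (∀ l, l ≠ i → l ≠ j → f l = 1) →
        (prodTo f m).trace = (f i * f j).trace := fun f hf => by
      rcases prodTo_pair_or hij hi hj hf with h | h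
      · rw [h]
      · rw [h, Matrix.trace_mul_comm]
    have h := hχ B hB
    rw [hc, key _ fun l hl hl' => ?_, key B fun l hl hl' => by rw [Bl l hl hl', map_one]] at h
    · rwa [if_pos hi, if_pos hj, Bi, Bj, hχperm j hj] at h
    · rw [Bl l hl hl']
      split_ifs with hlm
      · rw [hχperm l hlm, map_one]
      · exact map_one _
  have h : ψ i A = permMatrixHom (p i) * χ i A * permMatrixHom (p (i + 1))⁻¹ := by
    change _ = permMatrixHom (p i) * (permMatrixHom (p i)⁻¹ * ψ i A *
      permMatrixHom (p (i + 1))) * permMatrixHom (p (i + 1))⁻¹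
    rw [mul_assoc, mul_assoc, mul_assoc, hinv, mul_one, ← mul_assoc, hinv, one_mul]
  rw [h, hAχ]

end Main

/-! ### Equivalence of the trace, spectrum and conjugation conditions -/

theorem stmt13 (n m : ℕ) (hn : 0 < n) (hm : 3 ≤ m)
    (φ : Fin m → Matrix (Fin n) (Fin n) ℝ → Matrix (Fin n) (Fin n) ℝ)
    (hφ : ∀ i A, IsDS A → IsDS (φ i A)) :
    ((∀ A : Fin m → Matrix (Fin n) (Fin n) ℝ, (∀ i, IsDS (A i)) →
        ((List.ofFn fun i => φ i (A i)).prod).trace = ((List.ofFn A).prod).trace) ↔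
      (∀ A : Fin m → Matrix (Fin n) (Fin n) ℝ, (∀ i, IsDS (A i)) →
        ((List.ofFn fun i => φ i (A i)).prod).charpoly = ((List.ofFn A).prod).charpoly)) ∧
    ((∀ A : Fin m → Matrix (Fin n) (Fin n) ℝ, (∀ i, IsDS (A i)) →
        ((List.ofFn fun i => φ i (A i)).prod).trace = ((List.ofFn A).prod).trace) ↔
      (∃ P : ℕ → Matrix (Fin n) (Fin n) ℝ, (∀ i, i ≤ m → IsPerm (P i)) ∧ P m = P 0 ∧
        ∀ i : Fin m, ∀ A, IsDS A → φ i A = P i.val * A * (P (i.val + 1))ᵀ)) := by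
  have h31 : (∃ P : ℕ → Matrix (Fin n) (Fin n) ℝ, (∀ i, i ≤ m → IsPerm (P i)) ∧ P m = P 0 ∧
        ∀ i : Fin m, ∀ A, IsDS A → φ i A = P i.val * A * (P (i.val + 1))ᵀ) →
      (∀ A : Fin m → Matrix (Fin n) (Fin n) ℝ, (∀ i, IsDS (A i)) →
        ((List.ofFn fun i => φ i (A i)).prod).charpoly = ((List.ofFn A).prod).charpoly) := by
    rintro ⟨P, hP, hPm, h⟩ A hA
    have hPT : ∀ i ≤ m, (P i)ᵀ * P i = 1 := fun i hi => by
      obtain ⟨σ, hσ⟩ := hP i hi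
      rw [hσ, transpose_permMatrix, ← permMatrix_mul, mul_inv_cancel, permMatrix_one]
    have hPT0 : P 0 * (P 0)ᵀ = 1 := mul_eq_one_comm.mp (hPT 0 (by omega))
    let B : ℕ → Matrix (Fin n) (Fin n) ℝ := fun l => if hl : l < m then A ⟨l, hl⟩ else 1
    have hB : ∀ i : Fin m, B i = A i := fun i => dif_pos i.2
    have e1 : (List.ofFn A).prod = prodTo B m := by
      rw [← prod_ofFn_eq_prodTo]; simp only [hB]
    have e2 : (List.ofFn fun i => φ i (A i)).prod = P 0 * prodTo B m * (P 0)ᵀ := by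
      have := prodTo_telescope (a := fun i => (P i)ᵀ) (b := P) B hPT0 (m := m)
        (fun i hi => hPT i hi.le)
      simp only [hPm] at this
      rw [← this, ← prod_ofFn_eq_prodTo]
      simp only [hB, fun i => h i _ (hA i)]
    rw [e1, e2, Matrix.charpoly_mul_comm, ← mul_assoc, hPT 0 (by omega), one_mul]
  have h21 : (∀ A : Fin m → Matrix (Fin n) (Fin n) ℝ, (∀ i, IsDS (A i)) →
        ((List.ofFn fun i => φ i (A i)).prod).charpoly = ((List.ofFn A).prod).charpoly) →
      (∀ A : Fin m → Matrix (Fin n) (Fin n) ℝ, (∀ i, IsDS (A i)) →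
        ((List.ofFn fun i => φ i (A i)).prod).trace = ((List.ofFn A).prod).trace) :=
    fun h A hA => by
      rw [Matrix.trace_eq_neg_charpoly_nextCoeff, h A hA, ← Matrix.trace_eq_neg_charpoly_nextCoeff]
  have h13 : (∀ A : Fin m → Matrix (Fin n) (Fin n) ℝ, (∀ i, IsDS (A i)) →
        ((List.ofFn fun i => φ i (A i)).prod).trace = ((List.ofFn A).prod).trace) →
      (∃ P : ℕ → Matrix (Fin n) (Fin n) ℝ, (∀ i, i ≤ m → IsPerm (P i)) ∧ P m = P 0 ∧
        ∀ i : Fin m, ∀ A, IsDS A → φ i A = P i.val * A * (P (i.val + 1))ᵀ) := by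
    intro h
    -- The maps are indexed by all naturals, extended by the identity.
    let ψ : ℕ → Matrix (Fin n) (Fin n) ℝ → Matrix (Fin n) (Fin n) ℝ := fun i A =>
      if hi : i < m then φ ⟨i, hi⟩ A else A
    have hψφ : ∀ (i : Fin m) A, ψ i A = φ i A := fun i A => dif_pos i.2
    obtain ⟨p, hp0, hp⟩ := exists_perm_of_trace_eq hn hm ψ
      (fun i A hA => by
        by_cases hi : i < m
        · rw [hψφ ⟨i, hi⟩]
          exact isDS_iff_mem.mp (hφ _ A (isDS_iff_mem.mpr hA))
        · simpa only [ψ, hi, dif_neg, not_false_eq_true] using hA)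
      (fun i hi A => dif_neg (by omega))
      (fun A hA => by
        have := h (fun i => A i) fun i => isDS_iff_mem.mpr (hA i)
        rw [← prod_ofFn_eq_prodTo, ← prod_ofFn_eq_prodTo]
        simpa only [hψφ] using this)
    refine ⟨fun i => permMatrixHom (p i), fun i _ => ⟨(p i)⁻¹, rfl⟩, congrArg _ hp0,
      fun i A hA => ?_⟩
    rw [← hψφ, hp i i.2 A (isDS_iff_mem.mp hA), permMatrixHom_transpose]
  exact ⟨⟨fun h => h31 (h13 h), h21⟩, ⟨h13, fun h => h21 (h31 h)⟩⟩
end
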